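/- arXiv:math/0304413 — 2 statements merged into one kernel-verified Lean document; each statement's English description precedes it below -/
import Mathlib

section
/- There exist constants C and D such that for every finite solvable group G and every irreducible character χ of G, the derived length of G/Ker(χ) is at most C·η(χ) + D. -/
open scoped Classical BigOperators

/-- Inner product of class functions on a finite group. -/
noncomputable def charInner (G : Type) [Group G] [Fintype G] (φ ψ : G → ℂ) : ℂ :=
  (Fintype.card G : ℂ)⁻¹ * ∑ g : G, φ g * (starRingEnd ℂ) (ψ g)

/-- `χ` is the character of an irreducible complex representation of `G`. -/
def IsIrrChar (G : Type) [Group G] [Fintype G] (χ : G → ℂ) : Prop :=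
  ∃ V : FDRep ℂ G, CategoryTheory.Simple V ∧ V.character = χ

/-- The number of distinct non-principal irreducible constituents of `χ ⬝ conj χ`. -/
noncomputable def etaChar (G : Type) [Group G] [Fintype G] (χ : G → ℂ) : ℕ :=
  Set.ncard {α : G → ℂ | IsIrrChar G α ∧ α ≠ (fun _ => 1) ∧
    charInner G (fun g => χ g * (starRingEnd ℂ) (χ g)) α ≠ 0}

/-- Kernel of a character, as a set. -/
def charKer (G : Type) [Group G] (χ : G → ℂ) : Set G := {g | χ g = χ 1}

/-- Induced character from a subgroup. -/
noncomputable def indChar (K : Type) [Group K] [Fintype K] (H : Subgroup K) (φ : H → ℂ) :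
    K → ℂ := fun k =>
  (Nat.card H : ℂ)⁻¹ * ∑ x : K, if h : x⁻¹ * k * x ∈ H then φ ⟨x⁻¹ * k * x, h⟩ else 0


/-- Derived length of a group. -/
noncomputable def derivedLength (G : Type) [Group G] : ℕ :=
  sInf {n | derivedSeries G n = ⊥}

/-- A finite group is supersolvable if it has a chain of normal subgroups of `G`
from `⊥` to `⊤` with cyclic factors. -/
def IsSupersolvableGroup (G : Type) [Group G] : Prop :=
  ∃ (n : ℕ) (H : Fin (n + 1) → Subgroup G),
    (∀ i, (H i).Normal) ∧ Monotone H ∧ H 0 = ⊥ ∧ H (Fin.last n) = ⊤ ∧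
    ∀ i : Fin n, ∃ g ∈ H i.succ, H i.succ ≤ H i.castSucc ⊔ Subgroup.zpowers g

/-!
Let `ρ` be an irreducible representation on `V` with character `χ`; the constituents of `χ χ̄` are
those of `End V`. Let `L / K` be a chief factor and `W` a nonzero group of linear characters of
`L / K`, invariant under a normal subgroup `N`, all of which are weights of `L` on `End V`. By
Clifford's theorem a constituent determines a single `G`-orbit of weights. Hence the stabilizer of
a minimal `N`-invariant `X ≤ W` is irreducible on `X` with at most `r` nonzero orbits, `r` being the
number of constituents that are trivial on `K` but not on `L`.

A solvable group that acts irreducibly on a finite module with `r` nonzero orbits has derived length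
at most `10 r` plus a constant. If the action is primitive, a self-centralizing normal subgroup `F`
of class two controls it: the derived length and the logarithm of the group order are quadratic in
`n = log |F / Z(F)|`, while the dimension is exponential in `n`, so few orbits force a small `n`.
In an imprimitive action the number of blocks on which a vector is supported is constant on orbits
and takes every value, so there are at most `r` blocks. Consequently a term of the derived series
of `N` of index linear in `r` fixes a nonzero character in `W`, and so centralizes `L / K`.

Let `X` be a minimal subspace of `V` from which `ρ` is induced, and let `C` be the normal core of
its stabilizer. Along a maximal chain of subgroups from `G` down to that stabilizer, whenever the
normal core shrinks there is a chief factor between the two cores to which the above applies: the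
translates of `X` being independent, a character trivial on the stabilizer is a weight of `End V`.
The constituents counted at different steps are distinct, so a term of the derived series of `G` of
index linear in `η(χ)` lies in `C`.

By minimality of `X`, a normal subgroup of `G` inside `C` that is abelian modulo `ker ρ` acts on `X`
by scalars, and so is central in `C` modulo `ker ρ`. Let `Z` be that centre, acting on `X` through
`μ`. If `L / Z` is a chief factor with `L ≤ C`, the characters `l ↦ μ ⁅l, m⁆` are weights of `L` on
`End V`, so a term `D` of the derived series of `C` centralizes `L / Z`. If `⁅D, D⁆` were not
contained in `Z`, we could choose `L ≤ ⁅D, D⁆ Z`, and the three subgroups lemma would make `L`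
abelian modulo `ker ρ`, hence contained in `Z`.
-/

namespace EtaBound

section DerivedSeries

variable {G : Type*} [Group G]

/-- The derived series of a subgroup `H`, whose terms are kept as subgroups of the ambient group so
that series of different subgroups can be compared. -/
def derivedSeriesOf (H : Subgroup G) : ℕ → Subgroup G
  | 0 => H
  | n + 1 => ⁅derivedSeriesOf H n, derivedSeriesOf H n⁆

lemma derivedSeriesOf_succ (H : Subgroup G) (n : ℕ) :
    derivedSeriesOf H (n + 1) = ⁅derivedSeriesOf H n, derivedSeriesOf H n⁆ := rfl

lemma derivedSeriesOf_top (n : ℕ) : derivedSeriesOf (⊤ : Subgroup G) n = derivedSeries G n := by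
  induction n with
  | zero => rfl
  | succ n ih => rw [derivedSeriesOf_succ, ih, derivedSeries_succ]

lemma derivedSeriesOf_mono {H K : Subgroup G} (h : H ≤ K) (n : ℕ) :
    derivedSeriesOf H n ≤ derivedSeriesOf K n := by
  induction n with
  | zero => exact h
  | succ n ih => exact Subgroup.commutator_mono ih ih

lemma derivedSeriesOf_add (H : Subgroup G) (m n : ℕ) :
    derivedSeriesOf H (m + n) = derivedSeriesOf (derivedSeriesOf H m) n := by
  induction n with
  | zero => rfl
  | succ n ih => rw [← Nat.add_assoc, derivedSeriesOf_succ, ih, derivedSeriesOf_succ]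

lemma derivedSeriesOf_antitone (H : Subgroup G) : Antitone (derivedSeriesOf H) :=
  antitone_nat_of_succ_le fun _ => Subgroup.commutator_le_self _

lemma derivedSeriesOf_le (H : Subgroup G) (n : ℕ) : derivedSeriesOf H n ≤ H :=
  derivedSeriesOf_antitone H (Nat.zero_le n)

instance derivedSeriesOf_normal (H : Subgroup G) [H.Normal] (n : ℕ) :
    (derivedSeriesOf H n).Normal := by
  induction n with
  | zero => assumption
  | succ n ih => rw [derivedSeriesOf_succ]; infer_instance

lemma map_derivedSeriesOf {G' : Type*} [Group G'] (f : G →* G') (H : Subgroup G) (n : ℕ) :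
    (derivedSeriesOf H n).map f = derivedSeriesOf (H.map f) n := by
  induction n with
  | zero => rfl
  | succ n ih => rw [derivedSeriesOf_succ, Subgroup.map_commutator, ih, derivedSeriesOf_succ]

lemma map_subtype_derivedSeriesOf_top (H : Subgroup G) (n : ℕ) :
    (derivedSeriesOf (⊤ : Subgroup H) n).map H.subtype = derivedSeriesOf H n := by
  rw [map_derivedSeriesOf, ← MonoidHom.range_eq_map, Subgroup.range_subtype]

lemma derivedLength_quotient_le {G : Type} [Group G] {K : Subgroup G} [K.Normal] {n : ℕ}
    (h : derivedSeriesOf ⊤ n ≤ K) : derivedLength (G ⧸ K) ≤ n := by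
  refine Nat.sInf_le ?_
  rw [Set.mem_ofPred_eq, ← derivedSeriesOf_top, ← Subgroup.map_top_of_surjective
    (QuotientGroup.mk' K) (QuotientGroup.mk'_surjective K), ← map_derivedSeriesOf,
    Subgroup.map_eq_bot_iff, QuotientGroup.ker_mk']
  exact h

lemma two_le_relIndex_of_lt [Finite G] {H K : Subgroup G} (h : H < K) : 2 ≤ H.relIndex K := by
  have ne_zero : H.relIndex K ≠ 0 := Subgroup.index_ne_zero_of_finite
  have ne_one : H.relIndex K ≠ 1 := fun h1 => h.not_ge (Subgroup.relIndex_eq_one.1 h1)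
  lia

lemma derivedSeriesOf_eq_bot_of_card_le [Finite G] [Group.IsSolvable G] {n : ℕ} {H : Subgroup G}
    (h : Nat.card H ≤ 2 ^ n) : derivedSeriesOf H n = ⊥ := by
  induction n generalizing H with
  | zero => exact Subgroup.eq_bot_of_card_le H (by simpa using h)
  | succ n ih =>
    rcases eq_or_ne H ⊥ with rfl | hH
    · exact eq_bot_iff.2 (derivedSeriesOf_le ⊥ _)
    have hlt : ⁅H, H⁆ < H := Group.IsSolvable.commutator_lt_of_ne_bot hH
    have hcard : Nat.card (⁅H, H⁆ : Subgroup G) * ⁅H, H⁆.relIndex H = Nat.card H := by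
      simpa only [Subgroup.relIndex_bot_left] using
        Subgroup.relIndex_mul_relIndex ⊥ ⁅H, H⁆ H bot_le hlt.le
    rw [Nat.add_comm, derivedSeriesOf_add]
    refine ih ?_
    change Nat.card (⁅H, H⁆ : Subgroup G) ≤ 2 ^ n
    nlinarith [two_le_relIndex_of_lt hlt, pow_succ 2 n]

lemma derivedSeriesOf_le_of_relIndex_le [Finite G] [Group.IsSolvable G] {n : ℕ} {H N : Subgroup G}
    [N.Normal] (h : N.relIndex H ≤ 2 ^ n) : derivedSeriesOf H n ≤ N := by
  have hcard : Nat.card (H.map (QuotientGroup.mk' N)) ≤ 2 ^ n := by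
    rwa [← Subgroup.relIndex_ker, QuotientGroup.ker_mk']
  have hbot := derivedSeriesOf_eq_bot_of_card_le hcard
  rwa [← map_derivedSeriesOf, Subgroup.map_eq_bot_iff, QuotientGroup.ker_mk'] at hbot

end DerivedSeries

section ActionOnSections

lemma exists_sup_closure_range_eq_top {M : Type*} [Group M] [Finite M] {n : ℕ} {A : Subgroup M}
    (h : A.index ≤ 2 ^ n) : ∃ t : Fin n → M, A ⊔ Subgroup.closure (Set.range t) = ⊤ := by
  induction n generalizing A with
  | zero =>
    have hA : A = ⊤ := Subgroup.index_eq_one.1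
      (le_antisymm (by simpa using h) (Nat.one_le_iff_ne_zero.2 Subgroup.index_ne_zero_of_finite))
    exact ⟨Fin.elim0, by rw [hA, top_sup_eq]⟩
  | succ n ih =>
    rcases eq_or_ne A ⊤ with rfl | hA
    · exact ⟨1, top_sup_eq _⟩
    obtain ⟨x, -, hx⟩ := SetLike.exists_of_lt (lt_top_iff_ne_top.2 hA)
    have hlt : A < A ⊔ Subgroup.zpowers x :=
      left_lt_sup.2 fun hle => hx (hle (Subgroup.mem_zpowers x))
    have hindex := Subgroup.relIndex_mul_index hlt.le
    obtain ⟨t, ht⟩ := ih (A := A ⊔ Subgroup.zpowers x)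
      (by nlinarith [two_le_relIndex_of_lt hlt, pow_succ 2 n])
    refine ⟨Fin.cons x t, ?_⟩
    rw [Fin.range_cons, Set.insert_eq, Subgroup.closure_union, ← Subgroup.zpowers_eq_closure,
      ← sup_assoc, ht]

lemma card_mulAut_le_card_pow {M : Type*} [Group M] [Finite M] {n : ℕ} (t : Fin n → M)
    (ht : Subgroup.closure (Set.range t) = ⊤) : Nat.card (MulAut M) ≤ Nat.card M ^ n := by
  have hinj : Function.Injective fun (σ : MulAut M) (i : Fin n) => σ (t i) := by
    intro σ τ hστ
    refine MulEquiv.toMonoidHom_injective (MonoidHom.eq_of_eqOn_dense ht ?_)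
    rintro _ ⟨i, rfl⟩
    exact congrFun hστ i
  simpa [Nat.card_fun] using Nat.card_le_card_of_injective _ hinj

lemma card_mulAut_le_two_pow {M : Type*} [Group M] [Finite M] {n : ℕ} (h : Nat.card M ≤ 2 ^ n) :
    Nat.card (MulAut M) ≤ 2 ^ (n * n) := by
  obtain ⟨t, ht⟩ := exists_sup_closure_range_eq_top (A := (⊥ : Subgroup M)) (by simpa using h)
  rw [bot_sup_eq] at ht
  calc Nat.card (MulAut M) ≤ Nat.card M ^ n := card_mulAut_le_card_pow t ht
    _ ≤ (2 ^ n) ^ n := Nat.pow_le_pow_left h n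
    _ = 2 ^ (n * n) := (pow_mul 2 n n).symm

lemma ker_conjNormal {G : Type*} [Group G] (F : Subgroup G) [F.Normal] :
    (MulAut.conjNormal (H := F)).ker = Subgroup.centralizer (F : Set G) := by
  ext g
  simp only [MonoidHom.mem_ker, MulEquiv.ext_iff, Subtype.forall, Subtype.ext_iff,
    MulAut.conjNormal_apply, MulAut.one_apply, mul_inv_eq_iff_eq_mul,
    Subgroup.mem_centralizer_iff, SetLike.mem_coe, eq_comm (a := g * _)]

variable {G : Type*} [Group G] [Finite G]

lemma index_centralizer_le_card_pow (F : Subgroup G) [F.Normal] {n : ℕ} (t : Fin n → F)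
    (ht : Subgroup.closure (Set.range t) = ⊤) :
    (Subgroup.centralizer (F : Set G)).index ≤ Nat.card F ^ n := by
  calc (Subgroup.centralizer (F : Set G)).index
      = Nat.card (MulAut.conjNormal (H := F)).range := by rw [← ker_conjNormal, Subgroup.index_ker]
    _ ≤ Nat.card (MulAut F) := Subgroup.card_le_card_group _
    _ ≤ Nat.card F ^ n := card_mulAut_le_card_pow t ht

variable [Group.IsSolvable G]

lemma derivedSeriesOf_le_centralizer {P A : Subgroup G} {n : ℕ}
    (hPA : P ≤ Subgroup.normalizer (A : Set G)) (hA : Nat.card A ≤ 2 ^ n) :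
    derivedSeriesOf P (n * n) ≤ Subgroup.centralizer (A : Set G) := by
  set N := Subgroup.normalizer (A : Set G)
  have hindex : A.normalizerMonoidHom.ker.relIndex (P.subgroupOf N) ≤ 2 ^ (n * n) := by
    rw [Subgroup.relIndex_ker]
    exact (Subgroup.card_le_card_group _).trans (card_mulAut_le_two_pow hA)
  have hle := Subgroup.map_mono (f := N.subtype) (derivedSeriesOf_le_of_relIndex_le hindex)
  rw [map_derivedSeriesOf, Subgroup.subgroupOf_map_subtype, inf_eq_left.2 hPA,
    Subgroup.normalizerMonoidHom_ker, Subgroup.subgroupOf_map_subtype] at hle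
  exact hle.trans inf_le_left

lemma commutator_derivedSeriesOf_le {P A B : Subgroup G} {n : ℕ}
    (hAB : A ≤ Subgroup.normalizer (B : Set G)) (hPA : P ≤ Subgroup.normalizer (A : Set G))
    (hPB : P ≤ Subgroup.normalizer (B : Set G)) (hindex : B.relIndex A ≤ 2 ^ n) :
    ⁅derivedSeriesOf P (n * n), A⁆ ≤ B := by
  set N := Subgroup.normalizer (B : Set G)
  let π := QuotientGroup.mk' (B.subgroupOf N)
  have hcard : Nat.card ((A.subgroupOf N).map π) ≤ 2 ^ n := by
    rwa [← Subgroup.relIndex_ker, QuotientGroup.ker_mk', Subgroup.relIndex_subgroupOf hAB]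
  have hnormalizer : (P.subgroupOf N).map π ≤
      Subgroup.normalizer ((A.subgroupOf N).map π : Set (N ⧸ B.subgroupOf N)) := by
    refine (Subgroup.map_mono ?_).trans (Subgroup.le_normalizer_map π)
    exact (Subgroup.comap_mono hPA).trans (Subgroup.le_normalizer_comap N.subtype)
  have hquotient := Subgroup.commutator_eq_bot_iff_le_centralizer.2
    (derivedSeriesOf_le_centralizer hnormalizer hcard)
  rw [← map_derivedSeriesOf, ← Subgroup.map_commutator, Subgroup.map_eq_bot_iff,
    QuotientGroup.ker_mk'] at hquotient
  have hle := Subgroup.map_mono (f := N.subtype) hquotient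
  rw [Subgroup.map_commutator, map_derivedSeriesOf, Subgroup.subgroupOf_map_subtype,
    Subgroup.subgroupOf_map_subtype, Subgroup.subgroupOf_map_subtype,
    inf_eq_left.2 hPB, inf_eq_left.2 hAB] at hle
  exact hle.trans inf_le_left

end ActionOnSections

section ChiefFactors

variable {G : Type*} [Group G]

/-- `L / K` is a chief factor: `K < L` are normal and no normal subgroup lies strictly between. -/
structure IsChiefFactor (K L : Subgroup G) : Prop where
  normal_bot : K.Normal
  normal_top : L.Normal
  lt : K < L
  eq_or_eq : ∀ M : Subgroup G, M.Normal → K ≤ M → M ≤ L → M = K ∨ M = L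

lemma exists_isChiefFactor [Finite G] {K N : Subgroup G} [hK : K.Normal] [hN : N.Normal]
    (h : K < N) : ∃ L ≤ N, IsChiefFactor K L := by
  obtain ⟨L, hLN, hL⟩ := exists_minimal_le_of_wellFoundedLT
    (fun L : Subgroup G => L.Normal ∧ K < L) N ⟨hN, h⟩
  refine ⟨L, hLN, hK, hL.1.1, hL.1.2, fun M hM hKM hML => ?_⟩
  rcases hKM.eq_or_lt with rfl | hlt
  · exact Or.inl rfl
  · exact Or.inr (hML.antisymm (hL.2 ⟨hM, hlt⟩ hML))

lemma IsChiefFactor.commutator_le [Group.IsSolvable G] {K L : Subgroup G}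
    (h : IsChiefFactor K L) : ⁅L, L⁆ ≤ K := by
  have := h.normal_bot
  have := h.normal_top
  rcases h.eq_or_eq (K ⊔ ⁅L, L⁆) inferInstance le_sup_left
    (sup_le h.lt.le (Subgroup.commutator_le_self L)) with hK | hL
  · exact sup_eq_left.1 hK
  have hperfect : ⁅L.map (QuotientGroup.mk' K), L.map (QuotientGroup.mk' K)⁆ =
      L.map (QuotientGroup.mk' K) := by
    conv_rhs => rw [← hL]
    rw [Subgroup.map_sup, QuotientGroup.map_mk'_self, bot_sup_eq, Subgroup.map_commutator]
  have hbot : L.map (QuotientGroup.mk' K) = ⊥ := by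
    by_contra hne
    exact (Group.IsSolvable.commutator_lt_of_ne_bot hne).ne hperfect
  rw [Subgroup.map_eq_bot_iff, QuotientGroup.ker_mk'] at hbot
  exact absurd hbot h.lt.not_ge

lemma exists_isChiefFactor_sup_eq_of_covBy [Finite G] {U V : Subgroup G} (hUV : U ⋖ V)
    (hcore : ¬ V.normalCore ≤ U) :
    ∃ L ≤ V.normalCore, IsChiefFactor U.normalCore L ∧ L ⊔ U = V := by
  have hlt : U.normalCore < V.normalCore :=
    (Subgroup.normalCore_mono hUV.le).lt_of_not_ge fun h => hcore (h.trans U.normalCore_le)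
  obtain ⟨L, hLV, hL⟩ := exists_isChiefFactor hlt
  have := hL.normal_top
  refine ⟨L, hLV, hL, ?_⟩
  refine (hUV.eq_or_eq le_sup_right (sup_le (hLV.trans V.normalCore_le) hUV.le)).resolve_left ?_
  exact fun h => hL.lt.not_ge (Subgroup.normal_le_normalCore.2 (sup_eq_right.1 h))

lemma sup_le_normalizer_inf {L U : Subgroup G} [L.Normal] (h : ⁅L, L⁆ ≤ U) :
    L ⊔ U ≤ Subgroup.normalizer ((L ⊓ U : Subgroup G) : Set G) := by
  refine sup_le ?_ ?_
  · rw [Subgroup.le_normalizer_iff_commutator_le_left]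
    exact le_inf (Subgroup.commutator_le_right (L ⊓ U) L)
      ((Subgroup.commutator_mono inf_le_left le_rfl).trans h)
  · refine le_trans ?_ Subgroup.inf_normalizer_le_normalizer_inf
    exact le_inf Subgroup.le_normalizer_of_normal Subgroup.le_normalizer

end ChiefFactors

section PermutationGroups

open scoped commutatorElement Pointwise

variable {G : Type*} [Group G]

lemma commutatorElement_mul_mul_of_commute {l h m k : G} (hlh : Commute l h) (hlm : Commute l m)
    (hlk : Commute l k) (hmh : Commute m h) (hmk : Commute m k) : ⁅l * h, m * k⁆ = ⁅h, k⁆ := by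
  have cancel_left {l h y : G} (hh : Commute l h) (hy : Commute l y) : ⁅l * h, y⁆ = ⁅h, y⁆ := by
    rw [hh.eq, commutatorElement_def, mul_assoc h l y, hy.eq]
    group
  rw [cancel_left hlh (hlm.mul_right hlk), ← commutatorElement_inv, cancel_left hmk hmh,
    commutatorElement_inv]

lemma commutator_le_normalCore {H L D : Subgroup G} [L.Normal] [D.Normal] (hD : D ≤ L ⊔ H)
    (hLL : ⁅L, L⁆ ≤ H.normalCore) (hDL : ⁅D, L⁆ ≤ H) : ⁅D, D⁆ ≤ H.normalCore := by
  let π := QuotientGroup.mk' H.normalCore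
  have commute_of_commutator_le {A : Subgroup G} (hA : ⁅A, L⁆ ≤ H.normalCore) {a l : G}
      (ha : a ∈ A) (hl : l ∈ L) : Commute (π l) (π a) := by
    rw [← commutatorElement_eq_one_iff_commute, ← commutatorElement_inv, inv_eq_one,
      ← map_commutatorElement]
    exact (QuotientGroup.eq_one_iff _).2 (hA (Subgroup.commutator_mem_commutator ha hl))
  have hDL : ⁅D, L⁆ ≤ H.normalCore := Subgroup.normal_le_normalCore.2 hDL
  have exists_factor {d : G} (hd : d ∈ D) :
      ∃ l ∈ L, ∃ h ∈ H, d = l * h ∧ ∀ m ∈ L, Commute (π m) (π h) := by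
    obtain ⟨l, hl, h, hh, rfl⟩ : d ∈ (L : Set G) * (H : Set G) := by
      rw [← Subgroup.normal_mul]
      exact hD hd
    refine ⟨l, hl, h, hh, rfl, fun m hm => ?_⟩
    have := (commute_of_commutator_le hLL hl hm).inv_right.mul_right
      (commute_of_commutator_le hDL hd hm)
    rwa [map_mul, inv_mul_cancel_left] at this
  refine Subgroup.normal_le_normalCore.2 (Subgroup.commutator_le.2 fun d hd e he => ?_)
  obtain ⟨l, hl, h, hh, rfl, hhL⟩ := exists_factor hd
  obtain ⟨m, hm, k, hk, rfl, hkL⟩ := exists_factor he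
  have heq : π ⁅l * h, m * k⁆ = π ⁅h, k⁆ := by
    simp only [map_commutatorElement, map_mul]
    exact commutatorElement_mul_mul_of_commute (hhL l hl) (commute_of_commutator_le hLL hm hl)
      (hkL l hl) (hhL m hm) (hkL m hm)
  have hmem := H.normalCore_le (QuotientGroup.eq.1 heq)
  have hhk : ⁅h, k⁆ ∈ H := Subgroup.commutator_le_self H (Subgroup.commutator_mem_commutator hh hk)
  exact inv_mem_iff.1 ((H.mul_mem_cancel_right hhk).1 hmem)

lemma sq_log_add_one_le {b : ℕ} (hb : 2 ≤ b) :
    (Nat.log 2 b + 1) * (Nat.log 2 b + 1) + 1 ≤ 9 * (b - 1) := by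
  have sq_le_two_pow {n : ℕ} (hn : 1 ≤ n) : (n + 1) * (n + 1) + 10 ≤ 9 * 2 ^ n := by
    induction n, hn using Nat.le_induction with
    | base => norm_num
    | succ n hn ih => rw [pow_succ]; nlinarith
  have := sq_le_two_pow (Nat.log_pos one_lt_two hb)
  have := Nat.pow_log_le_self 2 (x := b) (by lia)
  lia

lemma derivedSeriesOf_normalCore_le [Finite G] [Group.IsSolvable G] {U V : Subgroup G}
    (hUV : U ⋖ V) {n : ℕ} (hindex : U.relIndex V ≤ 2 ^ n) :
    derivedSeriesOf V.normalCore (n * n + 1) ≤ U.normalCore := by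
  by_cases hcore : V.normalCore ≤ U
  · exact (derivedSeriesOf_le _ _).trans (Subgroup.normal_le_normalCore.2 hcore)
  obtain ⟨L, hLV, hL, hsup⟩ := exists_isChiefFactor_sup_eq_of_covBy hUV hcore
  have := hL.normal_top
  have hnormalizer := sup_le_normalizer_inf (hL.commutator_le.trans U.normalCore_le)
  have hrelIndex : (L ⊓ U).relIndex L ≤ 2 ^ n := by
    rw [Subgroup.inf_relIndex_left]
    exact (Subgroup.relIndex_le_of_le_right (hLV.trans V.normalCore_le)
      Subgroup.index_ne_zero_of_finite).trans hindex
  refine commutator_le_normalCore (L := L) ?_ hL.commutator_le ?_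
  · exact ((derivedSeriesOf_le _ _).trans V.normalCore_le).trans hsup.ge
  · refine (commutator_derivedSeriesOf_le (le_sup_left.trans hnormalizer)
      Subgroup.le_normalizer_of_normal ?_ hrelIndex).trans inf_le_right
    exact (V.normalCore_le.trans hsup.ge).trans hnormalizer

lemma derivedSeriesOf_top_le_normalCore [Finite G] [Group.IsSolvable G] (H : Subgroup G) :
    derivedSeriesOf ⊤ (9 * (H.index - 1)) ≤ H.normalCore := by
  induction hk : H.index using Nat.strong_induction_on generalizing H with
  | _ k ih =>
  subst hk
  rcases eq_or_ne H ⊤ with rfl | hH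
  · exact le_top.trans (Subgroup.normal_le_normalCore.2 le_rfl)
  obtain ⟨U, hHU, -⟩ := exists_covBy_le_of_lt (lt_top_iff_ne_top.2 hH)
  have hindex := Subgroup.relIndex_mul_index hHU.le
  have hU : 0 < U.index := Nat.pos_of_ne_zero Subgroup.index_ne_zero_of_finite
  have hHU2 := two_le_relIndex_of_lt hHU.lt
  have hlog := sq_log_add_one_le hHU2
  set n := Nat.log 2 (H.relIndex U) + 1
  have hstep := derivedSeriesOf_normalCore_le hHU (n := n)
    (Nat.lt_pow_succ_log_self one_lt_two _).le
  have hlength : 9 * (U.index - 1) + (n * n + 1) ≤ 9 * (H.index - 1) := by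
    have : U.index + H.relIndex U ≤ H.index + 1 := by nlinarith
    lia
  calc derivedSeriesOf ⊤ (9 * (H.index - 1))
      ≤ derivedSeriesOf ⊤ (9 * (U.index - 1) + (n * n + 1)) := derivedSeriesOf_antitone _ hlength
    _ = derivedSeriesOf (derivedSeriesOf ⊤ (9 * (U.index - 1))) (n * n + 1) :=
        derivedSeriesOf_add _ _ _
    _ ≤ derivedSeriesOf U.normalCore (n * n + 1) :=
        derivedSeriesOf_mono (ih U.index (by nlinarith) U rfl) _
    _ ≤ H.normalCore := hstep

end PermutationGroups

section Translates

variable {R : Type*} [CommRing R] {G : Type*} [Group G] {M : Type*} [AddCommGroup M] [Module R M]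
  (ρ : Representation R G M)

/-- The action `W ↦ ρ g W` of the group on submodules. -/
def translate : G →* (Submodule R M ≃o Submodule R M) where
  toFun g :=
    { toFun := Submodule.map (ρ g)
      invFun := Submodule.map (ρ g⁻¹)
      left_inv := fun W => by
        rw [← Submodule.map_comp, ← Module.End.mul_eq_comp, ← map_mul, inv_mul_cancel, map_one]
        exact Submodule.map_id W
      right_inv := fun W => by
        rw [← Submodule.map_comp, ← Module.End.mul_eq_comp, ← map_mul, mul_inv_cancel, map_one]
        exact Submodule.map_id W
      map_rel_iff' := Submodule.map_le_map_iff_of_injective (ρ.apply_bijective g).injective _ _ }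
  map_one' := by
    refine RelIso.ext fun W => ?_
    change W.map (ρ 1) = W
    rw [map_one]
    exact Submodule.map_id W
  map_mul' g h := by
    refine RelIso.ext fun W => ?_
    change W.map (ρ (g * h)) = (W.map (ρ h)).map (ρ g)
    rw [map_mul, Module.End.mul_eq_comp, Submodule.map_comp]

/-- The subgroup of elements mapping the submodule `W` onto itself. -/
def stabilizer (W : Submodule R M) : Subgroup G :=
  (MulAction.stabilizer (Submodule R M ≃o Submodule R M) W).comap (translate ρ)

variable {ρ}

lemma translate_apply (g : G) (W : Submodule R M) : translate ρ g W = W.map (ρ g) := rfl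

lemma apply_mem_translate {g : G} {W : Submodule R M} {v : M} (hv : v ∈ W) :
    ρ g v ∈ translate ρ g W :=
  Submodule.mem_map_of_mem hv

lemma translate_mul_apply (g h : G) (W : Submodule R M) :
    translate ρ (g * h) W = translate ρ g (translate ρ h W) := by
  rw [map_mul, RelIso.mul_apply]

lemma translate_inv_translate (g : G) (W : Submodule R M) :
    translate ρ g⁻¹ (translate ρ g W) = W := by
  rw [← translate_mul_apply, inv_mul_cancel, map_one, RelIso.one_apply]

lemma translate_translate_inv (g : G) (W : Submodule R M) :
    translate ρ g (translate ρ g⁻¹ W) = W := by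
  rw [← translate_mul_apply, mul_inv_cancel, map_one, RelIso.one_apply]

lemma apply_mem_iff_mem_translate_inv {g : G} {W : Submodule R M} {v : M} :
    ρ g v ∈ W ↔ v ∈ translate ρ g⁻¹ W := by
  refine ⟨fun hv => ?_, fun hv => ?_⟩
  · simpa using apply_mem_translate (ρ := ρ) (g := g⁻¹) hv
  · simpa only [translate_translate_inv] using apply_mem_translate (ρ := ρ) (g := g) hv

lemma mem_stabilizer {g : G} {W : Submodule R M} : g ∈ stabilizer ρ W ↔ translate ρ g W = W :=
  Iff.rfl

lemma apply_mem_of_mem_stabilizer {g : G} {W : Submodule R M} (hg : g ∈ stabilizer ρ W) {v : M}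
    (hv : v ∈ W) : ρ g v ∈ W := by
  rw [← mem_stabilizer.1 hg]
  exact apply_mem_translate hv

lemma index_stabilizer (W : Submodule R M) :
    (stabilizer ρ W).index = (Set.range fun g => translate ρ g W).ncard := by
  let : MulAction G (Submodule R M) := MulAction.compHom _ (translate ρ)
  exact MulAction.index_stabilizer G W

lemma nontrivial_of_isSimpleOrder [IsSimpleOrder (Subrepresentation ρ)] : Nontrivial M := by
  by_contra hM
  rw [not_nontrivial_iff_subsingleton] at hM
  refine bot_ne_top (α := Subrepresentation ρ) (Subrepresentation.toSubmodule_injective ?_)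
  exact Subsingleton.elim _ _

lemma eq_bot_or_eq_top_of_translate_le [IsSimpleOrder (Subrepresentation ρ)] {W : Submodule R M}
    (hW : ∀ g, translate ρ g W ≤ W) : W = ⊥ ∨ W = ⊤ := by
  let σ : Subrepresentation ρ := ⟨W, fun g _ hv => hW g (apply_mem_translate hv)⟩
  exact (eq_bot_or_eq_top σ).imp (congrArg Subrepresentation.toSubmodule)
    (congrArg Subrepresentation.toSubmodule)

lemma iSup_translate_eq_top [IsSimpleOrder (Subrepresentation ρ)] {W : Submodule R M}
    (hW : W ≠ ⊥) : ⨆ g, translate ρ g W = ⊤ := by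
  refine (eq_bot_or_eq_top_of_translate_le (ρ := ρ) fun g => ?_).resolve_left fun hbot => hW ?_
  · rw [map_iSup]
    refine iSup_le fun h => ?_
    rw [← translate_mul_apply]
    exact le_iSup (fun g => translate ρ g W) (g * h)
  · rw [eq_bot_iff, ← hbot]
    exact le_iSup_of_le 1 (by rw [map_one, RelIso.one_apply])

end Translates

section Blocks

variable {R : Type*} [CommRing R] {G : Type*} [Group G] {M : Type*} [AddCommGroup M] [Module R M]
  (ρ : Representation R G M)

/-- The sum of the translates of `X` other than `W`. -/
def otherTranslates (X W : Submodule R M) : Submodule R M :=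
  ⨆ (g : G) (_ : translate ρ g X ≠ W), translate ρ g X

/-- A nonzero submodule is a block if the sum of its distinct translates is direct; for an
irreducible representation blocks are the submodules from which it is induced. -/
def IsBlock (W : Submodule R M) : Prop := W ≠ ⊥ ∧ Disjoint W (otherTranslates ρ W W)

/-- A representation is primitive if it has no proper blocks. -/
def IsPrimitive : Prop := ∀ W, IsBlock ρ W → W = ⊤

/-- The action of the stabilizer of a submodule on that submodule. -/
def stabilizerRep (X : Submodule R M) : Representation R (stabilizer ρ X) X where
  toFun h := (ρ h).restrict fun _ hv => apply_mem_of_mem_stabilizer h.2 hv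
  map_one' := by ext v; simp
  map_mul' a b := by ext v; simp

variable {ρ}

lemma translate_le_otherTranslates {X W : Submodule R M} {g : G} (h : translate ρ g X ≠ W) :
    translate ρ g X ≤ otherTranslates ρ X W :=
  le_iSup₂_of_le (f := fun g (_ : translate ρ g X ≠ W) => translate ρ g X) g h le_rfl

lemma translate_otherTranslates (g : G) (X W : Submodule R M) :
    translate ρ g (otherTranslates ρ X W) = otherTranslates ρ X (translate ρ g W) := by
  have translate_le (g : G) (W : Submodule R M) :
      translate ρ g (otherTranslates ρ X W) ≤ otherTranslates ρ X (translate ρ g W) := by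
    rw [otherTranslates, OrderIso.map_iSup₂]
    refine iSup₂_le fun h hW => ?_
    rw [← translate_mul_apply]
    refine translate_le_otherTranslates fun heq => hW ?_
    rw [translate_mul_apply] at heq
    exact (translate ρ g).injective heq
  refine (translate_le g W).antisymm ?_
  have := (translate ρ g).monotone (translate_le g⁻¹ (translate ρ g W))
  rwa [translate_translate_inv, translate_inv_translate] at this

lemma IsBlock.disjoint_translate {X : Submodule R M} (hX : IsBlock ρ X) (g : G) :
    Disjoint (translate ρ g X) (otherTranslates ρ X (translate ρ g X)) := by
  rw [← translate_otherTranslates]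
  exact (disjoint_map_orderIso_iff (translate ρ g)).2 hX.2

lemma IsBlock.isCompl [IsSimpleOrder (Subrepresentation ρ)] {X : Submodule R M}
    (hX : IsBlock ρ X) : IsCompl X (otherTranslates ρ X X) := by
  refine ⟨hX.2, ?_⟩
  rw [codisjoint_iff, eq_top_iff, ← iSup_translate_eq_top (ρ := ρ) hX.1]
  refine iSup_le fun g => ?_
  by_cases hg : translate ρ g X = X
  · exact le_sup_of_le_left hg.le
  · exact le_sup_of_le_right (translate_le_otherTranslates hg)

lemma IsBlock.mem_stabilizer {X : Submodule R M} (hX : IsBlock ρ X) {g : G} {v : M} (hv : v ∈ X)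
    (hv0 : v ≠ 0) (hg : ρ g v ∈ X) : g ∈ stabilizer ρ X := by
  by_contra hgX
  have h0 := Submodule.disjoint_def.1 hX.2 _ hg
    (translate_le_otherTranslates hgX (apply_mem_translate hv))
  exact hv0 ((ρ.apply_bijective g).injective (h0.trans (map_zero _).symm))

lemma isBlock_top [Nontrivial M] : IsBlock ρ ⊤ := by
  refine ⟨top_ne_bot, ?_⟩
  have hbot : otherTranslates ρ (⊤ : Submodule R M) ⊤ = ⊥ :=
    eq_bot_iff.2 (iSup₂_le fun g hg => absurd (map_top (translate ρ g)) hg)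
  rw [hbot]
  exact disjoint_bot_right

lemma exists_minimal_isBlock [Nontrivial M] [IsArtinian R M] (ρ : Representation R G M) :
    ∃ X, Minimal (IsBlock ρ) X :=
  (exists_minimal_le_of_wellFoundedLT (IsBlock ρ) ⊤ isBlock_top).imp fun _ h => h.2

lemma map_subtype_translate_stabilizerRep {X : Submodule R M} (h : stabilizer ρ X)
    (W : Submodule R X) : (translate (stabilizerRep ρ X) h W).map X.subtype =
      translate ρ (h : G) (W.map X.subtype) := by
  rw [translate_apply, translate_apply, ← Submodule.map_comp, ← Submodule.map_comp]
  rfl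

lemma IsBlock.map_subtype {X : Submodule R M} (hX : IsBlock ρ X) {W : Submodule R X}
    (hW : IsBlock (stabilizerRep ρ X) W) : IsBlock ρ (W.map X.subtype) := by
  set W' := W.map X.subtype
  have hinj := Submodule.map_injective_of_injective X.injective_subtype
  have hW'X : W' ≤ X := Submodule.map_subtype_le X W
  set A := (otherTranslates (stabilizerRep ρ X) W W).map X.subtype
  have hdisjoint : Disjoint W' A := by
    rw [disjoint_iff, ← Submodule.map_inf _ X.injective_subtype, disjoint_iff.1 hW.2,
      Submodule.map_bot]
  have hle : otherTranslates ρ W' W' ≤ A ⊔ otherTranslates ρ X X := by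
    refine iSup₂_le fun g hg => ?_
    by_cases hgX : translate ρ g X = X
    · have hmap := map_subtype_translate_stabilizerRep (⟨g, hgX⟩ : stabilizer ρ X) W
      refine le_sup_of_le_left (hmap.symm.le.trans (Submodule.map_mono ?_))
      refine translate_le_otherTranslates fun heq => hg ?_
      rw [← hmap, heq]
    · exact le_sup_of_le_right
        (((translate ρ g).monotone hW'X).trans (translate_le_otherTranslates hgX))
  refine ⟨fun hbot => hW.1 (hinj (hbot.trans (Submodule.map_bot _).symm)), ?_⟩
  refine Disjoint.mono_right hle (hdisjoint.disjoint_sup_right_of_disjoint_sup_left ?_)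
  exact hX.2.mono_left (sup_le hW'X (Submodule.map_subtype_le X _))

lemma isPrimitive_stabilizerRep {X : Submodule R M} (hX : Minimal (IsBlock ρ) X) :
    IsPrimitive (stabilizerRep ρ X) := by
  intro W hW
  have hXW := hX.2 (hX.1.map_subtype hW) (Submodule.map_subtype_le X W)
  rw [eq_top_iff]
  intro v _
  obtain ⟨w, hw, hwv⟩ := hXW v.2
  rwa [← Subtype.ext hwv]

end Blocks

section OrbitCovers

variable {R : Type*} [CommRing R] {G : Type*} [Group G] {M : Type*} [AddCommGroup M] [Module R M]
  (ρ : Representation R G M)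

/-- `S` meets every orbit of `G` on the nonzero vectors. -/
def CoversNonzeroOrbits (S : Finset M) : Prop := ∀ v : M, v ≠ 0 → ∃ s ∈ S, ∃ g, ρ g s = v

/-- The translates of the block `X` on which `v` has a nonzero component. -/
def blockSupport (X : Submodule R M) (v : M) : Set (Submodule R M) :=
  {W | W ∈ Set.range (fun g => translate ρ g X) ∧ v ∉ otherTranslates ρ X W}

variable {ρ}

lemma blockSupport_apply (X : Submodule R M) (g : G) (v : M) :
    blockSupport ρ X (ρ g v) = translate ρ g '' blockSupport ρ X v := by
  have mem_iff (W : Submodule R M) :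
      W ∈ blockSupport ρ X (ρ g v) ↔ translate ρ g⁻¹ W ∈ blockSupport ρ X v := by
    refine and_congr ⟨?_, ?_⟩ (not_congr ?_)
    · rintro ⟨h, rfl⟩
      exact ⟨g⁻¹ * h, translate_mul_apply _ _ _⟩
    · rintro ⟨h, hh⟩
      exact ⟨g * h, (translate_mul_apply _ _ _).trans
        ((congrArg (translate ρ g) hh).trans (translate_translate_inv _ _))⟩
    · rw [apply_mem_iff_mem_translate_inv, translate_otherTranslates]
  ext W
  rw [mem_iff]
  refine ⟨fun h => ⟨_, h, translate_translate_inv g W⟩, ?_⟩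
  rintro ⟨V, hV, rfl⟩
  rwa [translate_inv_translate]

lemma blockSupport_zero (X : Submodule R M) : blockSupport ρ X 0 = ∅ :=
  Set.eq_empty_of_forall_notMem fun _ h => h.2 (zero_mem _)

lemma IsBlock.exists_blockSupport_eq {X : Submodule R M} (hX : IsBlock ρ X)
    {T : Finset (Submodule R M)} (hT : (T : Set _) ⊆ Set.range fun g => translate ρ g X) :
    ∃ v, blockSupport ρ X v = T := by
  have exists_mem_ne_zero (W : Submodule R M) (hW : W ∈ T) : ∃ v ∈ W, v ≠ 0 := by
    obtain ⟨g, rfl⟩ := hT hW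
    exact Submodule.exists_mem_ne_zero_of_ne_bot fun h => hX.1 ((map_eq_bot_iff _).1 h)
  choose! w hwW hw0 using exists_mem_ne_zero
  have mem_other {V W : Submodule R M} (hV : V ∈ T) (hne : V ≠ W) :
      w V ∈ otherTranslates ρ X W := by
    obtain ⟨g, hg⟩ := hT hV
    subst hg
    exact translate_le_otherTranslates hne (hwW _ hV)
  refine ⟨∑ W ∈ T, w W, Set.Subset.antisymm ?_ fun W hW => ⟨hT hW, fun hsum => ?_⟩⟩
  · rintro W ⟨-, hW⟩
    by_contra hWT
    exact hW (Submodule.sum_mem _ fun V hV => mem_other hV (ne_of_mem_of_not_mem hV hWT))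
  · rw [← Finset.add_sum_erase T w hW] at hsum
    have hrest : ∑ V ∈ T.erase W, w V ∈ otherTranslates ρ X W := Submodule.sum_mem _ fun V hV =>
      mem_other (Finset.mem_of_mem_erase hV) (Finset.ne_of_mem_erase hV)
    have hwmem : w W ∈ otherTranslates ρ X W := (Submodule.add_mem_iff_left _ hrest).1 hsum
    obtain ⟨g, hg⟩ := hT hW
    subst hg
    exact hw0 _ hW (Submodule.disjoint_def.1 (hX.disjoint_translate g) _ (hwW _ hW) hwmem)

-- The size of the block support is constant on orbits and takes every value from `1` to the index.
lemma IsBlock.index_stabilizer_le [Finite G] {X : Submodule R M} (hX : IsBlock ρ X) {S : Finset M}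
    (hS : CoversNonzeroOrbits ρ S) : (stabilizer ρ X).index ≤ S.card := by
  have hfin : (Set.range fun g => translate ρ g X).Finite := Set.finite_range _
  rw [index_stabilizer, Set.ncard_eq_toFinset_card _ hfin]
  have hsub : Finset.Icc 1 hfin.toFinset.card ⊆ S.image fun s => (blockSupport ρ X s).ncard := by
    intro j hj
    obtain ⟨hj1, hj2⟩ := Finset.mem_Icc.1 hj
    obtain ⟨T, hT, rfl⟩ := Finset.exists_subset_card_eq hj2
    obtain ⟨v, hv⟩ := hX.exists_blockSupport_eq (T := T)
      fun W hW => hfin.mem_toFinset.1 (hT hW)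
    have hv0 : v ≠ 0 := by
      rintro rfl
      rw [blockSupport_zero, eq_comm, Finset.coe_eq_empty] at hv
      simp [hv] at hj1
    obtain ⟨s, hs, g, rfl⟩ := hS v hv0
    refine Finset.mem_image.2 ⟨s, hs, ?_⟩
    rw [← Set.ncard_coe_finset T, ← hv, blockSupport_apply,
      Set.ncard_image_of_injective _ (translate ρ g).injective]
  simpa using (Finset.card_le_card hsub).trans Finset.card_image_le

end OrbitCovers

section SemilinearActions

variable {H : Type*} [Group H] {V : Type*} [AddCommGroup V] {ρ : Representation ℤ H V}
  {K : Type*} [CommRing K] [Module K V] {e : H → K ≃+* K}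

lemma mem_torsionBySet_ideal {P : Ideal K} {v : V} :
    v ∈ (Submodule.torsionBySet K V P).restrictScalars ℤ ↔ ∀ k ∈ P, k • v = 0 := by
  rw [Submodule.restrictScalars_mem, Submodule.mem_torsionBySet_iff]
  exact Subtype.forall

lemma translate_torsionBySet (he : ∀ h k v, ρ h (k • v) = e h k • ρ h v) (P : Ideal K) (h : H) :
    translate ρ h ((Submodule.torsionBySet K V P).restrictScalars ℤ) =
      (Submodule.torsionBySet K V (P.comap (e h).symm)).restrictScalars ℤ := by
  ext w
  refine ⟨?_, fun hw => ⟨ρ h⁻¹ w, mem_torsionBySet_ideal.2 fun k hk => ?_, ρ.self_inv_apply h w⟩⟩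
  · rintro ⟨v, hv, rfl⟩
    refine mem_torsionBySet_ideal.2 fun k hk => ?_
    rw [← (e h).apply_symm_apply k, ← he, mem_torsionBySet_ideal.1 hv _ hk, map_zero]
  · refine (ρ.apply_bijective h).injective ?_
    rw [he, ρ.self_inv_apply, map_zero]
    exact mem_torsionBySet_ideal.1 hw _ (by simpa using hk)

variable [Finite K]

lemma isBlock_torsionBySet (he : ∀ h k v, ρ h (k • v) = e h k • ρ h v) {P : Ideal K}
    [hP : P.IsMaximal] (hbot : Submodule.torsionBySet K V P ≠ ⊥) :
    IsBlock ρ ((Submodule.torsionBySet K V P).restrictScalars ℤ) := by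
  have : Finite (Ideal K) := Finite.of_injective _ SetLike.coe_injective
  let maximals : Finset (Ideal K) := (Set.toFinite {Q : Ideal K | Q.IsMaximal}).toFinset
  have mem_maximals (Q : Ideal K) : Q ∈ maximals ↔ Q.IsMaximal := by simp [maximals]
  have hindep : maximals.SupIndep fun Q => Submodule.torsionBySet K V Q :=
    Submodule.supIndep_torsionBySet_ideal fun Q hQ Q' hQ' hne =>
      ((mem_maximals Q).1 hQ).coprime_of_ne ((mem_maximals Q').1 hQ') hne
  have hdisjoint := hindep (Finset.erase_subset P maximals) ((mem_maximals P).2 hP)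
    (Finset.notMem_erase P maximals)
  have hle : otherTranslates ρ ((Submodule.torsionBySet K V P).restrictScalars ℤ)
      ((Submodule.torsionBySet K V P).restrictScalars ℤ) ≤
      ((maximals.erase P).sup fun Q => Submodule.torsionBySet K V Q).restrictScalars ℤ := by
    refine iSup₂_le fun h hh => ?_
    rw [translate_torsionBySet he] at hh ⊢
    have hmem : P.comap (e h).symm ∈ maximals.erase P := Finset.mem_erase.2
      ⟨fun heq => hh (by rw [heq]), (mem_maximals _).2
        (Ideal.comap_isMaximal_of_surjective _ (e h).symm.surjective)⟩
    intro v hv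
    exact Finset.le_sup (f := fun Q : Ideal K => Submodule.torsionBySet K V Q) hmem hv
  refine ⟨fun h => hbot ((Submodule.restrictScalars_eq_bot_iff ℤ K V).1 h),
    Disjoint.mono_right hle ?_⟩
  rw [Submodule.disjoint_def] at hdisjoint ⊢
  exact hdisjoint

lemma isField_of_isPrimitive [Nontrivial V] (hρ : IsPrimitive ρ) [FaithfulSMul K V]
    (he : ∀ h k v, ρ h (k • v) = e h k • ρ h v) : IsField K := by
  obtain ⟨P, hP⟩ := associatedPrimes.nonempty K V
  have hprime : P.IsPrime := hP.isPrime
  have : Finite (K ⧸ P) := Finite.of_surjective _ Ideal.Quotient.mk_surjective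
  have hmaximal : P.IsMaximal := Ideal.Quotient.maximal_of_isField P (Finite.isField_of_domain _)
  have hbot : Submodule.torsionBySet K V P ≠ ⊥ := by
    obtain ⟨-, x, rfl⟩ := isAssociatedPrime_iff.1 hP
    refine fun h => hprime.ne_top ?_
    have hx : x ∈ Submodule.torsionBySet K V (Submodule.colon (⊥ : Submodule K V) {x}) := by
      rw [Submodule.mem_torsionBySet_iff]
      exact fun k => (Submodule.mem_bot K).1 (Submodule.mem_colon_singleton.1 k.2)
    rw [h, Submodule.mem_bot] at hx
    simp [hx, Ideal.eq_top_iff_one]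
  have htop := hρ _ (isBlock_torsionBySet he hbot)
  have hPbot : P = ⊥ := by
    refine eq_bot_iff.2 fun k hk => FaithfulSMul.eq_of_smul_eq_smul fun v : V => ?_
    rw [zero_smul]
    exact mem_torsionBySet_ideal.1 (htop ▸ Submodule.mem_top) k hk
  subst hPbot
  have : Nontrivial K := (Submodule.nontrivial_iff K).1 ⟨⊥, ⊤, hprime.ne_top⟩
  exact Ring.isField_iff_maximal_bot.2 hmaximal

end SemilinearActions

section GeneratedField

universe u v

variable {H : Type u} [Group H] {V : Type v} [AddCommGroup V] (ρ : Representation ℤ H V)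

/-- Conjugation by `ρ h` on the endomorphism ring. -/
def conjEnd (h : H) : Module.End ℤ V ≃+* Module.End ℤ V :=
  (LinearMap.GeneralLinearGroup.generalLinearEquiv ℤ V (ρ.asGroupHom h)).conjRingEquiv

variable {ρ}

lemma conjEnd_apply (h : H) (f : Module.End ℤ V) : conjEnd ρ h f = ρ h * f * ρ h⁻¹ := rfl

lemma conjEnd_apply_apply (h : H) (f : Module.End ℤ V) (v : V) :
    conjEnd ρ h f (ρ h v) = ρ h (f v) := by
  simp only [conjEnd_apply, Module.End.mul_apply, ρ.inv_self_apply]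

lemma map_conjEnd_closure (A : Subgroup H) [hA : A.Normal] (h : H) :
    (Subring.closure (ρ '' A)).map (conjEnd ρ h : Module.End ℤ V →+* Module.End ℤ V) =
      Subring.closure (ρ '' A) := by
  have conjEnd_ρ (a : H) : conjEnd ρ h (ρ a) = ρ (h * a * h⁻¹) := by
    rw [conjEnd_apply, map_mul, map_mul]
  rw [RingHom.map_closure]
  congr 1
  refine Set.Subset.antisymm ?_ ?_
  · rintro _ ⟨_, ⟨a, ha, rfl⟩, rfl⟩
    exact ⟨h * a * h⁻¹, hA.conj_mem a ha h, (conjEnd_ρ a).symm⟩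
  · rintro _ ⟨a, ha, rfl⟩
    refine ⟨ρ (h⁻¹ * a * h), ⟨_, by simpa using hA.conj_mem a ha h⁻¹, rfl⟩, (conjEnd_ρ _).trans ?_⟩
    congr 1
    group

lemma closure_le_centralizer_of_mem_centralizer {A : Subgroup H} {h : H}
    (hh : h ∈ Subgroup.centralizer (A : Set H)) :
    Subring.closure (ρ '' A) ≤ Subring.centralizer {ρ h} := by
  rw [Subring.closure_le]
  rintro _ ⟨a, ha, rfl⟩
  refine Subring.mem_centralizer_iff.2 fun f hf => ?_
  rw [Set.mem_singleton_iff.1 hf, ← map_mul, ← map_mul, Subgroup.mem_centralizer_iff.1 hh a ha]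

lemma exists_field_of_isPrimitive [Nontrivial V] [Finite V] (hρ : IsPrimitive ρ) (A : Subgroup H)
    [A.Normal] [IsMulCommutative A] :
    ∃ (K : Type v) (_ : Field K) (_ : Finite K) (_ : Module K V) (ι : A →* K),
      (∀ a v, ι a • v = ρ (a : H) v) ∧
      ∀ h ∈ Subgroup.centralizer (A : Set H), ∀ (k : K) v, ρ h (k • v) = k • ρ h v := by
  let s : Subring (Module.End ℤ V) := Subring.closure (ρ '' A)
  have : IsMulCommutative s := Subring.isMulCommutative_closure <| by
    rintro _ ⟨a, ha, rfl⟩ _ ⟨b, hb, rfl⟩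
    rw [← map_mul, ← map_mul, setLike_mul_comm ha hb]
  let : CommRing s := { s.toRing with mul_comm := mul_comm' }
  have : Finite (Module.End ℤ V) := Finite.of_injective _ DFunLike.coe_injective
  have : FaithfulSMul s V := ⟨fun h => Subtype.ext (LinearMap.ext h)⟩
  let e (h : H) : s ≃+* s :=
    ((conjEnd ρ h).subringMap (s := s)).trans (RingEquiv.subringCongr (map_conjEnd_closure A h))
  have hs : IsField s := isField_of_isPrimitive (K := s) hρ (e := e)
    fun h k v => (conjEnd_apply_apply h k.1 v).symm
  let : Field s := hs.toField
  let ι : A →* s :=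
    { toFun := fun a => ⟨ρ a, Subring.subset_closure ⟨a, a.2, rfl⟩⟩
      map_one' := Subtype.ext (map_one ρ)
      map_mul' := fun a b => Subtype.ext (map_mul ρ _ _) }
  refine ⟨s, inferInstance, inferInstance, inferInstance, ι, fun _ _ => rfl, fun h hh k v => ?_⟩
  have := Subring.mem_centralizer_iff.1 (closure_le_centralizer_of_mem_centralizer hh k.2)
  exact LinearMap.congr_fun (this (ρ h) rfl) v

end GeneratedField

section ClassTwo

open scoped commutatorElement

variable {H : Type*} [Group H]

lemma commutator_le_iff_le_comap_centralizer {A X Y : Subgroup H} [A.Normal] : ⁅X, Y⁆ ≤ A ↔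
    X ≤ (Subgroup.centralizer (Y.map (QuotientGroup.mk' A) : Set (H ⧸ A))).comap
      (QuotientGroup.mk' A) := by
  rw [← Subgroup.map_le_iff_le_comap, ← Subgroup.commutator_eq_bot_iff_le_centralizer,
    ← Subgroup.map_commutator, Subgroup.map_eq_bot_iff, QuotientGroup.ker_mk']

lemma commutator_sup_le {A X Y Z : Subgroup H} [A.Normal] (hX : ⁅X, Z⁆ ≤ A) (hY : ⁅Y, Z⁆ ≤ A) :
    ⁅X ⊔ Y, Z⁆ ≤ A := by
  rw [commutator_le_iff_le_comap_centralizer] at *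
  exact sup_le hX hY

lemma commutator_sup_sup_le {A X Y : Subgroup H} [A.Normal] (hX : ⁅X, X⁆ ≤ A) (hY : ⁅Y, Y⁆ ≤ A)
    (hXY : ⁅X, Y⁆ ≤ A) : ⁅X ⊔ Y, X ⊔ Y⁆ ≤ A := by
  have hYX : ⁅Y, X⁆ ≤ A := Subgroup.commutator_comm X Y ▸ hXY
  refine commutator_sup_le ?_ ?_ <;> rw [Subgroup.commutator_comm]
  · exact commutator_sup_le hX hYX
  · exact commutator_sup_le hXY hY

lemma commutator_commutator_le_of_rotate {A D F : Subgroup H} [A.Normal] (h : ⁅⁅D, F⁆, D⁆ ≤ A) :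
    ⁅⁅D, D⁆, F⁆ ≤ A := by
  rw [← QuotientGroup.ker_mk' A, ← Subgroup.map_eq_bot_iff] at h ⊢
  simp only [Subgroup.map_commutator] at h ⊢
  refine Subgroup.commutator_commutator_eq_bot_of_rotate h ?_
  rwa [Subgroup.commutator_comm (F.map _)]

lemma commutator_commutator_eq_bot_of_commutator_le {A D F : Subgroup H} (hDF : ⁅D, F⁆ ≤ A)
    (hDA : D ≤ Subgroup.centralizer (A : Set H)) : ⁅⁅D, D⁆, F⁆ = ⊥ := by
  refine eq_bot_iff.2 (commutator_commutator_le_of_rotate ?_)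
  rw [← Subgroup.commutator_eq_bot_iff_le_centralizer.2 hDA, Subgroup.commutator_comm D A]
  exact Subgroup.commutator_mono hDF le_rfl

/-- The elements of `C` that are central in `C` modulo the normal subgroup `A`. -/
def centerModulo (A C : Subgroup H) [A.Normal] : Subgroup H :=
  C ⊓ (Subgroup.centralizer (C.map (QuotientGroup.mk' A) : Set (H ⧸ A))).comap
    (QuotientGroup.mk' A)

instance centerModulo_normal (A C : Subgroup H) [A.Normal] [C.Normal] :
    (centerModulo A C).Normal := by
  have := ‹C.Normal›.map (QuotientGroup.mk' A) (QuotientGroup.mk'_surjective A)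
  exact Subgroup.normal_inf_normal _ _

lemma le_centerModulo {A C X : Subgroup H} [A.Normal] :
    X ≤ centerModulo A C ↔ X ≤ C ∧ ⁅X, C⁆ ≤ A := by
  rw [centerModulo, le_inf_iff, commutator_le_iff_le_comap_centralizer]

lemma commutator_top_le_centralizer_of_isCyclic (A : Subgroup H) [A.Normal] [IsCyclic A] :
    ⁅(⊤ : Subgroup H), ⊤⁆ ≤ Subgroup.centralizer (A : Set H) := by
  rw [← ker_conjNormal, Subgroup.commutator_le]
  intro x _ y _
  rw [MonoidHom.mem_ker, map_commutatorElement, commutatorElement_eq_one_iff_mul_comm]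
  apply (IsCyclic.mulAutMulEquiv A).injective
  rw [map_mul, map_mul, mul_comm]

/-- A normal subgroup of nilpotency class at most two containing its own centralizer, which is
then its centre. In a solvable group it plays the role of the Fitting subgroup. -/
structure IsClassTwoSelfCentralizing (F : Subgroup H) : Prop where
  normal : F.Normal
  centralizer_le : Subgroup.centralizer (F : Set H) ≤ F
  commutator_le : ⁅F, F⁆ ≤ Subgroup.centralizer (F : Set H)

lemma exists_isClassTwoSelfCentralizing [Finite H] [Group.IsSolvable H] :
    ∃ F : Subgroup H, IsClassTwoSelfCentralizing F := by
  obtain ⟨A, ⟨hA, hAA⟩, hAmax⟩ := (Set.toFinite {A : Subgroup H | A.Normal ∧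
    A ≤ Subgroup.centralizer (A : Set H)}).exists_maximal ⟨⊥, inferInstance, bot_le⟩
  obtain ⟨F, ⟨hF, hAF, hFA, hFF⟩, hFmax⟩ := (Set.toFinite {F : Subgroup H | F.Normal ∧ A ≤ F ∧
    F ≤ Subgroup.centralizer (A : Set H) ∧ ⁅F, F⁆ ≤ A}).exists_maximal
    ⟨A, hA, le_rfl, hAA, Subgroup.commutator_le_self A⟩
  have hAZ : A ≤ Subgroup.centralizer (F : Set H) := Subgroup.le_centralizer_iff.1 hFA
  suffices hZA : Subgroup.centralizer (F : Set H) ≤ A from ⟨F, hF, hZA.trans hAF, hFF.trans hAZ⟩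
  by_contra hZA
  obtain ⟨L, hLZ, hL⟩ := exists_isChiefFactor (hAZ.lt_of_not_ge hZA)
  have := hL.normal_top
  have hLF : L ≤ F := by
    refine le_sup_right.trans (hFmax (y := F ⊔ L) ⟨inferInstance, hAF.trans le_sup_left,
      sup_le hFA (hLZ.trans (Subgroup.centralizer_le hAF)),
      commutator_sup_sup_le hFF hL.commutator_le ?_⟩ le_sup_left)
    rw [Subgroup.commutator_comm, Subgroup.commutator_eq_bot_iff_le_centralizer.2 hLZ]
    exact bot_le
  have hLL : L ≤ Subgroup.centralizer (L : Set H) := hLZ.trans (Subgroup.centralizer_le hLF)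
  exact hL.lt.not_ge (hAmax ⟨this, hLL⟩ hL.lt.le)

variable {F : Subgroup H}

lemma IsClassTwoSelfCentralizing.isMulCommutative_centralizer (hF : IsClassTwoSelfCentralizing F) :
    IsMulCommutative (Subgroup.centralizer (F : Set H)) := by
  rw [← Subgroup.commutator_self_eq_bot_iff, Subgroup.commutator_eq_bot_iff_le_centralizer]
  exact Subgroup.centralizer_le hF.centralizer_le

/-- The homomorphism `x ↦ ⁅x, f⁆` on a group of nilpotency class at most two. -/
def commutatorHom (hF : ⁅F, F⁆ ≤ Subgroup.centralizer (F : Set H)) (f : F) :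
    F →* Subgroup.centralizer (F : Set H) where
  toFun x := ⟨⁅(x : H), (f : H)⁆, hF (Subgroup.commutator_mem_commutator x.2 f.2)⟩
  map_one' := Subtype.ext (commutatorElement_one_left _)
  map_mul' x y := by
    have mem_centralizer (x : F) : ⁅(x : H), (f : H)⁆ ∈ Subgroup.centralizer (F : Set H) :=
      hF (Subgroup.commutator_mem_commutator x.2 f.2)
    have hx := Subgroup.mem_centralizer_iff.1 (mem_centralizer y) x x.2
    have hxf := Subgroup.mem_centralizer_iff.1 (mem_centralizer y) ⁅(x : H), (f : H)⁆
      (Subgroup.commutator_le_self F (Subgroup.commutator_mem_commutator x.2 f.2))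
    refine Subtype.ext ?_
    change ⁅(x : H) * y, (f : H)⁆ = ⁅(x : H), (f : H)⁆ * ⁅(y : H), (f : H)⁆
    rw [commutatorElement_mul_left_eq_conj_mul, hx, mul_inv_cancel_right, hxf]

lemma inv_mul_mem_centralizer_of_commutatorHom_eq
    {hF : ⁅F, F⁆ ≤ Subgroup.centralizer (F : Set H)} {f g : F}
    (h : commutatorHom hF f = commutatorHom hF g) :
    (f⁻¹ * g : H) ∈ Subgroup.centralizer (F : Set H) := by
  refine Subgroup.mem_centralizer_iff.2 fun x hx => ?_
  have hfg : ⁅x, (f : H)⁆ = ⁅x, (g : H)⁆ :=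
    congrArg Subtype.val (DFunLike.congr_fun h (⟨x, hx⟩ : F))
  rw [← inv_inj, commutatorElement_inv, commutatorElement_inv, commutatorElement_def,
    commutatorElement_def, mul_left_inj] at hfg
  calc x * ((f : H)⁻¹ * g) = (f : H)⁻¹ * (f * x * (f : H)⁻¹) * g := by group
    _ = (f : H)⁻¹ * g * x := by rw [hfg]; group

lemma IsClassTwoSelfCentralizing.derivedSeriesOf_top_eq_bot [Finite H] [Group.IsSolvable H]
    (hF : IsClassTwoSelfCentralizing F) [IsCyclic (Subgroup.centralizer (F : Set H))] {n : ℕ}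
    (hindex : (Subgroup.centralizer (F : Set H)).relIndex F ≤ 2 ^ n) :
    derivedSeriesOf (⊤ : Subgroup H) (n * n + 3) = ⊥ := by
  have := hF.normal
  set A := Subgroup.centralizer (F : Set H)
  let D := derivedSeriesOf (derivedSeriesOf (⊤ : Subgroup H) 1) (n * n)
  have hDA : D ≤ Subgroup.centralizer (A : Set H) :=
    (derivedSeriesOf_le _ _).trans (commutator_top_le_centralizer_of_isCyclic A)
  have hDF : ⁅D, F⁆ ≤ A := commutator_derivedSeriesOf_le Subgroup.le_normalizer_of_normal
    Subgroup.le_normalizer_of_normal Subgroup.le_normalizer_of_normal hindex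
  have hDD : ⁅D, D⁆ ≤ A := Subgroup.commutator_eq_bot_iff_le_centralizer.1
    (commutator_commutator_eq_bot_of_commutator_le hDF hDA)
  have hAA : ⁅A, A⁆ = ⊥ :=
    Subgroup.commutator_self_eq_bot_iff.2 hF.isMulCommutative_centralizer
  calc derivedSeriesOf (⊤ : Subgroup H) (n * n + 3) = ⁅⁅D, D⁆, ⁅D, D⁆⁆ := by
        rw [show n * n + 3 = 1 + n * n + 2 by ring, derivedSeriesOf_add, derivedSeriesOf_add]
        rfl
    _ = ⊥ := eq_bot_iff.2 ((Subgroup.commutator_mono hDD hDD).trans hAA.le)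

lemma IsClassTwoSelfCentralizing.card_le [Finite H] (hF : IsClassTwoSelfCentralizing F)
    [IsCyclic (Subgroup.centralizer (F : Set H))] {n : ℕ}
    (hindex : (Subgroup.centralizer (F : Set H)).relIndex F ≤ 2 ^ n) :
    Nat.card H ≤ (2 ^ n * Nat.card (Subgroup.centralizer (F : Set H))) ^ (n + 1) *
      Nat.card (Subgroup.centralizer (F : Set H)) := by
  have := hF.normal
  set A := Subgroup.centralizer (F : Set H)
  have hcardF : Nat.card F ≤ 2 ^ n * Nat.card A := by
    rw [← (A.subgroupOf F).index_mul_card,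
      Nat.card_congr (Subgroup.subgroupOfEquivOfLe hF.centralizer_le).toEquiv]
    exact Nat.mul_le_mul_right _ hindex
  obtain ⟨t, ht⟩ := exists_sup_closure_range_eq_top hindex
  have hcyclic : IsCyclic (A.subgroupOf F) := isCyclic_of_injective
    (Subgroup.subgroupOfEquivOfLe hF.centralizer_le).toMonoidHom (MulEquiv.injective _)
  obtain ⟨a, ha⟩ := (A.subgroupOf F).isCyclic_iff_exists_zpowers_eq_top.1 hcyclic
  have hgen : Subgroup.closure (Set.range (Fin.cons a t : Fin (n + 1) → F)) = ⊤ := by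
    rw [Fin.range_cons, Set.insert_eq, Subgroup.closure_union, ← Subgroup.zpowers_eq_closure, ha,
      ht]
  calc Nat.card H = A.index * Nat.card A := A.index_mul_card.symm
    _ ≤ Nat.card F ^ (n + 1) * Nat.card A :=
        Nat.mul_le_mul_right _ (index_centralizer_le_card_pow F _ hgen)
    _ ≤ (2 ^ n * Nat.card A) ^ (n + 1) * Nat.card A :=
        Nat.mul_le_mul_right _ (Nat.pow_le_pow_left hcardF _)

end ClassTwo

section Eigenvectors

variable {K : Type*} [Field K] {F : Type*} [Monoid F] {W : Type*} [AddCommGroup W] [Module K W]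

lemma linearIndependent_of_apply_eq_smul (τ : Representation K F W) {Q : Type*} {ψ : Q → F →* K}
    (hψ : Function.Injective ψ) {w : Q → W} (hw : ∀ q, w q ≠ 0)
    (heigen : ∀ x q, τ x (w q) = ψ q x • w q) : LinearIndependent K w := by
  rw [linearIndependent_iff']
  intro s c hc q hq
  have hzero (φ : Module.Dual K W) : c q * φ (w q) = 0 := by
    refine linearIndependent_iff'.1 ((linearIndependent_monoidHom F K).comp ψ hψ) s
      (fun q => c q * φ (w q)) (funext fun x => ?_) q hq
    have hx := congrArg (φ ∘ τ x) hc
    simp only [Function.comp_apply, map_sum, map_smul, heigen, map_zero, smul_eq_mul] at hx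
    simp only [Finset.sum_apply, Pi.smul_apply, Function.comp_apply, smul_eq_mul, Pi.zero_apply]
    rw [← hx]
    exact Finset.sum_congr rfl fun p _ => by ring
  by_contra hcq
  exact hw q ((Module.forall_dual_apply_eq_zero_iff K _).1 fun φ =>
    (mul_eq_zero.1 (hzero φ)).resolve_left hcq)

open scoped commutatorElement in
lemma IsClassTwoSelfCentralizing.relIndex_le_sq_finrank {H : Type*} [Group H]
    {F : Subgroup H} (hF : IsClassTwoSelfCentralizing F) [Nontrivial W] [Module.Finite K W]
    (σ : Representation K F W) (ι : Subgroup.centralizer (F : Set H) →* K)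
    (hι : Function.Injective ι)
    (hσ : ∀ (a : F) (ha : (a : H) ∈ Subgroup.centralizer (F : Set H)) w, ι ⟨a, ha⟩ • w = σ a w) :
    (Subgroup.centralizer (F : Set H)).relIndex F ≤ Module.finrank K W ^ 2 := by
  let Q := F ⧸ (Subgroup.centralizer (F : Set H)).subgroupOf F
  let ψ (q : Q) : F →* K := ι.comp (commutatorHom hF.commutator_le q.out)
  have hψ : Function.Injective ψ := by
    intro p q hpq
    rw [← QuotientGroup.out_eq' p, ← QuotientGroup.out_eq' q, QuotientGroup.eq,
      Subgroup.mem_subgroupOf]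
    exact inv_mul_mem_centralizer_of_commutatorHom_eq
      (MonoidHom.ext fun x => hι (DFunLike.congr_fun hpq x))
  have hne (q : Q) : σ q.out ≠ 0 := by
    obtain ⟨w, hw⟩ := exists_ne (0 : W)
    intro h0
    apply hw
    rw [← σ.inv_self_apply q.out w, h0, LinearMap.zero_apply, map_zero]
  have heigen (x : F) (q : Q) : Representation.linHom σ σ x (σ q.out) = ψ q x • σ q.out := by
    ext w
    have hx : ψ q x • σ q.out w = σ ⁅x, q.out⁆ (σ q.out w) := hσ ⁅x, q.out⁆ _ _
    rw [LinearMap.smul_apply, hx, Representation.linHom_apply, LinearMap.comp_apply,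
      LinearMap.comp_apply, ← Module.End.mul_apply, ← Module.End.mul_apply, ← Module.End.mul_apply,
      ← map_mul, ← map_mul, ← map_mul, commutatorElement_def]
    congr 2
    group
  have hindep := linearIndependent_of_apply_eq_smul _ hψ hne heigen
  have := hindep.finite_of_isNoetherian
  have := Fintype.ofFinite Q
  have hcard := hindep.fintype_card_le_finrank
  rwa [Module.finrank_linearMap, ← sq, ← Nat.card_eq_fintype_card] at hcard

end Eigenvectors

section OrbitTheorem

/-- The additive constant in the bound for the derived length of a solvable linear group by its
number of orbits. It is irreducible to keep `derivedSeriesOf` from unfolding along a literal. -/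
@[irreducible] def orbitConstant : ℕ := 403

lemma lt_twenty_of_two_pow_le {n : ℕ} (h : 2 ^ n ≤ 4 * (n + 2) ^ 4) : n < 20 := by
  by_contra! hn
  have lt_two_pow : 4 * (n + 2) ^ 4 < 2 ^ n := by
    clear h
    induction n, hn using Nat.le_induction with
    | base => norm_num
    | succ m hm ih =>
      have hstep : (m + 1 + 2) ^ 4 ≤ 2 * (m + 2) ^ 4 := by
        obtain ⟨k, rfl⟩ := Nat.exists_eq_add_of_le hm
        ring_nf
        nlinarith [Nat.zero_le (k ^ 4), Nat.zero_le (k ^ 3), Nat.zero_le (k ^ 2)]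
      rw [pow_succ 2]
      lia
  exact h.not_gt lt_two_pow

lemma sq_add_three_le_add_orbitConstant {n d q s : ℕ} (hq : 2 ≤ q) (hn : 2 ^ n ≤ d ^ 2)
    (hs : q ^ d ≤ (1 + s) * q ^ ((n + 2) ^ 2 + 1)) :
    (n + 1) * (n + 1) + 3 ≤ s + orbitConstant := by
  rw [orbitConstant]
  rcases Nat.lt_or_ge (2 * (n + 2) ^ 2) d with hd | hd
  · have hle : q ^ (n + 2) ^ 2 * q ^ ((n + 2) ^ 2 + 1) ≤ (1 + s) * q ^ ((n + 2) ^ 2 + 1) := by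
      rw [← pow_add]
      exact (Nat.pow_le_pow_right (by lia) (by lia)).trans hs
    have hlt : (n + 2) ^ 2 < 1 + s := calc
      (n + 2) ^ 2 < 2 ^ (n + 2) ^ 2 := Nat.lt_two_pow_self
      _ ≤ q ^ (n + 2) ^ 2 := Nat.pow_le_pow_left hq _
      _ ≤ 1 + s := Nat.le_of_mul_le_mul_right hle (Nat.pow_pos (by lia))
    nlinarith
  · have hn20 : n < 20 := lt_twenty_of_two_pow_le <| calc
      2 ^ n ≤ (2 * (n + 2) ^ 2) ^ 2 := hn.trans (Nat.pow_le_pow_left hd 2)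
      _ = 4 * (n + 2) ^ 4 := by ring
    nlinarith

variable {G : Type*} [Group G] {V : Type*} [AddCommGroup V]

/-- The representation of a subgroup acting linearly over `K`. -/
def linearRep (ρ : Representation ℤ G V) (F : Subgroup G) (K : Type*) [Field K] [Module K V]
    (h : ∀ f ∈ F, ∀ (k : K) v, ρ f (k • v) = k • ρ f v) : Representation K F V where
  toFun f := { (ρ f).toAddMonoidHom with map_smul' := h f f.2 }
  map_one' := by ext v; simp
  map_mul' a b := by ext v; simp

lemma exists_coversNonzeroOrbits_stabilizerRep {R ι : Type*} [CommRing R] [Module R V]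
    {ρ : Representation R G V} {X : Submodule R V}
    (hX : ∀ g, ∀ v ∈ X, v ≠ 0 → ρ g v ∈ X → g ∈ stabilizer ρ X) {S : Finset ι}
    {label : ι → V → Prop} (hlabel : ∀ i v w, label i v → label i w → ∃ g, ρ g v = w)
    (hS : ∀ v ∈ X, v ≠ 0 → ∃ i ∈ S, label i v) :
    ∃ T : Finset X, T.card ≤ S.card ∧ CoversNonzeroOrbits (stabilizerRep ρ X) T := by
  let rep (i : ι) : X := if h : ∃ w : X, w ≠ 0 ∧ label i w then h.choose else 0
  refine ⟨S.image rep, Finset.card_image_le, fun v hv => ?_⟩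
  obtain ⟨i, hi, hiv⟩ := hS v v.2 fun h => hv (Subtype.ext h)
  have hex : ∃ w : X, w ≠ 0 ∧ label i w := ⟨v, hv, hiv⟩
  have hrep : rep i = hex.choose := dif_pos hex
  obtain ⟨hne, hirep⟩ := hex.choose_spec
  rw [← hrep] at hne hirep
  obtain ⟨g, hg⟩ := hlabel i _ _ hirep hiv
  have hmem := hX g _ (rep i).2 (fun h => hne (Subtype.ext h)) (hg ▸ v.2)
  exact ⟨rep i, Finset.mem_image_of_mem rep hi, ⟨g, hmem⟩, Subtype.ext hg⟩

lemma IsBlock.exists_coversNonzeroOrbits_stabilizerRep {R : Type*} [CommRing R] [Module R V]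
    {ρ : Representation R G V} {X : Submodule R V} (hX : IsBlock ρ X) {S : Finset V}
    (hS : CoversNonzeroOrbits ρ S) :
    ∃ T : Finset X, T.card ≤ S.card ∧ CoversNonzeroOrbits (stabilizerRep ρ X) T := by
  refine EtaBound.exists_coversNonzeroOrbits_stabilizerRep (label := fun s v => ∃ g, ρ g s = v)
    (fun _ _ => hX.mem_stabilizer) ?_ fun v _ hv => hS v hv
  rintro s _ _ ⟨g, rfl⟩ ⟨h, rfl⟩
  exact ⟨h * g⁻¹, by rw [map_mul, Module.End.mul_apply, ρ.inv_self_apply]⟩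

lemma le_ker_of_forall_apply_eq {R : Type*} [CommRing R] [Module R V] {ρ : Representation R G V}
    [IsSimpleOrder (Subrepresentation ρ)] {X : Submodule R V} (hX : X ≠ ⊥) {N : Subgroup G}
    [hN : N.Normal] (h : ∀ x ∈ N, ∀ v ∈ X, ρ x v = v) : N ≤ MonoidHom.ker ρ := by
  intro x hx
  have htop : LinearMap.eqLocus (ρ x) (1 : Module.End R V) = ⊤ := by
    rw [eq_top_iff, ← iSup_translate_eq_top (ρ := ρ) hX]
    refine iSup_le fun g => ?_
    rintro _ ⟨v, hv, rfl⟩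
    have hconj := congrArg (ρ g) (h (g⁻¹ * x * g) (by simpa using hN.conj_mem x hx g⁻¹) v hv)
    rw [← Module.End.mul_apply, ← map_mul, mul_assoc g⁻¹, mul_inv_cancel_left, map_mul] at hconj
    exact hconj
  exact LinearMap.ext fun v => (htop ▸ Submodule.mem_top : v ∈ LinearMap.eqLocus (ρ x) 1)

variable [Finite G]

lemma CoversNonzeroOrbits.card_le {R : Type*} [CommRing R] [Module R V]
    {ρ : Representation R G V} {S : Finset V} (hS : CoversNonzeroOrbits ρ S) :
    Nat.card V ≤ 1 + S.card * Nat.card G := by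
  have := Fintype.ofFinite G
  let T : Finset V := {0} ∪ (S ×ˢ (Finset.univ : Finset G)).image fun p => ρ p.2 p.1
  have hT (v : V) : v ∈ T := by
    by_cases hv : v = 0
    · simp [T, hv]
    · obtain ⟨s, hs, g, hg⟩ := hS v hv
      exact Finset.mem_union_right _ (Finset.mem_image.2 ⟨(s, g), by simp [hs], hg⟩)
  calc Nat.card V = Nat.card T := (Nat.card_congr (Equiv.subtypeUnivEquiv hT)).symm
    _ = T.card := by rw [Nat.card_eq_fintype_card, Fintype.card_coe]
    _ ≤ 1 + S.card * Nat.card G := by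
      refine (Finset.card_union_le _ _).trans ?_
      refine Nat.add_le_add_left (Finset.card_image_le.trans ?_) 1
      rw [Finset.card_product, Finset.card_univ, Nat.card_eq_fintype_card]

variable [Group.IsSolvable G]

lemma derivedSeriesOf_top_eq_bot_of_isPrimitive [Finite V] [Nontrivial V]
    {ρ : Representation ℤ G V} (hinj : Function.Injective ρ) (hρ : IsPrimitive ρ) {S : Finset V}
    (hS : CoversNonzeroOrbits ρ S) :
    derivedSeriesOf (⊤ : Subgroup G) (S.card + orbitConstant) = ⊥ := by
  obtain ⟨F, hF⟩ := exists_isClassTwoSelfCentralizing (H := G)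
  have := hF.normal
  have := hF.isMulCommutative_centralizer
  set A := Subgroup.centralizer (F : Set G)
  obtain ⟨K, _, _, _, ι, hι, hlin⟩ := exists_field_of_isPrimitive hρ A
  have hιinj : Function.Injective ι := fun a b hab =>
    Subtype.ext (hinj (LinearMap.ext fun v => by rw [← hι, ← hι, hab]))
  have hcyclic : IsCyclic A := isCyclic_of_injective_ringHom ι hιinj
  have : Module.Finite K V := Module.Finite.of_finite
  have hFA : F ≤ Subgroup.centralizer (A : Set G) := Subgroup.le_centralizer_iff.1 le_rfl
  have hdim : A.relIndex F ≤ Module.finrank K V ^ 2 := hF.relIndex_le_sq_finrank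
    (linearRep ρ F K fun f hf => hlin f (hFA hf)) ι hιinj fun a ha w => hι ⟨a, ha⟩ w
  set n := Nat.log 2 (A.relIndex F)
  have hn : 2 ^ n ≤ A.relIndex F := Nat.pow_log_le_self 2 Subgroup.index_ne_zero_of_finite
  have hindex : A.relIndex F ≤ 2 ^ (n + 1) := (Nat.lt_pow_succ_log_self one_lt_two _).le
  have hq : 2 ≤ Nat.card K := Finite.one_lt_card
  have hcardA : Nat.card A ≤ Nat.card K := Nat.card_le_card_of_injective ι hιinj
  have hcardG : Nat.card G ≤ Nat.card K ^ ((n + 2) ^ 2 + 1) := calc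
    Nat.card G ≤ (2 ^ (n + 1) * Nat.card A) ^ (n + 1 + 1) * Nat.card A := hF.card_le hindex
    _ ≤ (Nat.card K ^ (n + 1) * Nat.card K) ^ (n + 1 + 1) * Nat.card K := by gcongr
    _ = Nat.card K ^ ((n + 2) ^ 2 + 1) := by ring
  have hcardV : Nat.card K ^ Module.finrank K V ≤
      (1 + S.card) * Nat.card K ^ ((n + 2) ^ 2 + 1) := calc
    Nat.card K ^ Module.finrank K V = Nat.card V := Module.natCard_eq_pow_finrank.symm
    _ ≤ 1 + S.card * Nat.card G := hS.card_le
    _ ≤ Nat.card K ^ ((n + 2) ^ 2 + 1) + S.card * Nat.card K ^ ((n + 2) ^ 2 + 1) := by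
      gcongr
      exact Nat.one_le_pow _ _ (by lia)
    _ = (1 + S.card) * Nat.card K ^ ((n + 2) ^ 2 + 1) := by ring
  rw [eq_bot_iff, ← hF.derivedSeriesOf_top_eq_bot hindex]
  exact derivedSeriesOf_antitone _ (sq_add_three_le_add_orbitConstant hq (hn.trans hdim) hcardV)

lemma derivedSeriesOf_top_le_ker_of_isPrimitive [Finite V] [Nontrivial V]
    {ρ : Representation ℤ G V} (hρ : IsPrimitive ρ) {S : Finset V}
    (hS : CoversNonzeroOrbits ρ S) :
    derivedSeriesOf (⊤ : Subgroup G) (S.card + orbitConstant) ≤ MonoidHom.ker ρ := by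
  let ρ' : Representation ℤ (G ⧸ MonoidHom.ker ρ) V := QuotientGroup.lift _ ρ le_rfl
  have hinj : Function.Injective ρ' := by
    rintro ⟨g⟩ ⟨h⟩ hgh
    exact QuotientGroup.eq.2 ((MonoidHom.eq_iff ρ).1 hgh.symm)
  have hprim : IsPrimitive ρ' := fun W hW => hρ W ⟨hW.1, hW.2.mono_right <|
    iSup₂_le fun g hg => translate_le_otherTranslates (ρ := ρ') (g := g) hg⟩
  have hS' : CoversNonzeroOrbits ρ' S := fun v hv =>
    let ⟨s, hs, g, hg⟩ := hS v hv
    ⟨s, hs, g, hg⟩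
  have hbot := derivedSeriesOf_top_eq_bot_of_isPrimitive hinj hprim hS'
  rwa [← Subgroup.map_top_of_surjective _ (QuotientGroup.mk'_surjective (MonoidHom.ker ρ)),
    ← map_derivedSeriesOf, Subgroup.map_eq_bot_iff, QuotientGroup.ker_mk'] at hbot

theorem derivedSeriesOf_top_le_ker_of_coversNonzeroOrbits [Finite V] {ρ : Representation ℤ G V}
    [IsSimpleOrder (Subrepresentation ρ)] {S : Finset V} (hS : CoversNonzeroOrbits ρ S) :
    derivedSeriesOf (⊤ : Subgroup G) (10 * S.card + orbitConstant) ≤ MonoidHom.ker ρ := by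
  have := nontrivial_of_isSimpleOrder (ρ := ρ)
  obtain ⟨X, hX⟩ := exists_minimal_isBlock ρ
  have : Nontrivial X := Submodule.nontrivial_iff_ne_bot.2 hX.1.1
  obtain ⟨T, hTS, hT⟩ := hX.1.exists_coversNonzeroOrbits_stabilizerRep hS
  have hprim := derivedSeriesOf_top_le_ker_of_isPrimitive (isPrimitive_stabilizerRep hX) hT
  set C := (stabilizer ρ X).normalCore
  have hC : derivedSeriesOf C (S.card + orbitConstant) ≤ MonoidHom.ker ρ := by
    refine le_ker_of_forall_apply_eq hX.1.1 fun x hx v hv => ?_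
    have hx' : x ∈ derivedSeriesOf (stabilizer ρ X) (T.card + orbitConstant) :=
      derivedSeriesOf_antitone _ (by lia) (derivedSeriesOf_mono (Subgroup.normalCore_le _) _ hx)
    rw [← map_subtype_derivedSeriesOf_top] at hx'
    obtain ⟨y, hy, rfl⟩ := hx'
    exact congrArg Subtype.val (LinearMap.congr_fun (hprim hy) ⟨v, hv⟩)
  have hindex := hX.1.index_stabilizer_le hS
  calc derivedSeriesOf (⊤ : Subgroup G) (10 * S.card + orbitConstant)
      ≤ derivedSeriesOf ⊤ (9 * ((stabilizer ρ X).index - 1) + (S.card + orbitConstant)) :=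
        derivedSeriesOf_antitone _ (by lia)
    _ = derivedSeriesOf (derivedSeriesOf ⊤ (9 * ((stabilizer ρ X).index - 1)))
          (S.card + orbitConstant) := derivedSeriesOf_add _ _ _
    _ ≤ derivedSeriesOf C (S.card + orbitConstant) :=
        derivedSeriesOf_mono (derivedSeriesOf_top_le_normalCore _) _
    _ ≤ MonoidHom.ker ρ := hC

end OrbitTheorem

section IrreducibleCharacters

open Representation

lemma isSimpleModule_of_finrank_end_eq_one {k A M : Type*} [Field k] [Ring A] [Algebra k A]
    [AddCommGroup M] [Module k M] [Module A M] [IsScalarTower k A M] [IsSemisimpleModule A M]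
    (hM : Module.finrank k (Module.End A M) = 1) : IsSimpleModule A M := by
  have : Nontrivial (Module.End A M) := Module.nontrivial_of_finrank_pos (R := k) (by omega)
  have : Nontrivial M := by
    by_contra hM
    rw [not_nontrivial_iff_subsingleton] at hM
    exact not_subsingleton (Module.End A M) inferInstance
  rw [isSimpleModule_iff]
  refine { eq_bot_or_eq_top := fun W => ?_ }
  obtain ⟨W', hcompl⟩ := exists_isCompl W
  obtain ⟨c, hc⟩ := (finrank_eq_one_iff_of_nonzero' (1 : Module.End A M) one_ne_zero).1 hM
    (W.projection W' hcompl)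
  rcases eq_or_ne c 0 with rfl | hc0
  · left
    rw [← Submodule.range_projection hcompl, ← hc, zero_smul, LinearMap.range_zero]
  · right
    have hker : W' = ⊥ := by
      rw [← Submodule.ker_projection hcompl, ← hc, LinearMap.ker_eq_bot']
      exact fun m hm => (smul_eq_zero.1 hm).resolve_left hc0
    rw [← hcompl.sup_eq_top, hker, sup_bot_eq]

variable {G : Type*} [Group G]

noncomputable instance invertibleNatCard [Finite G] : Invertible (Nat.card G : ℂ) :=
  invertibleOfNonzero (Nat.cast_ne_zero.2 Nat.card_pos.ne')

instance neZeroNatCard [Finite G] : NeZero (Nat.card G : ℂ) :=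
  ⟨Nat.cast_ne_zero.2 Nat.card_pos.ne'⟩

variable {V W : Type*} [AddCommGroup V] [Module ℂ V] [AddCommGroup W] [Module ℂ W]
  {ρ : Representation ℂ G V} {σ : Representation ℂ G W}

lemma isIrreducible_iff_finrank_intertwiningMap [Finite G] [FiniteDimensional ℂ V] :
    IsIrreducible ρ ↔ Module.finrank ℂ (IntertwiningMap ρ ρ) = 1 := by
  refine ⟨fun _ => IsIrreducible.finrank_intertwiningMap_self ρ, fun hρ => ?_⟩
  rw [irreducible_iff_isSimpleModule_asModule]
  have : IsSemisimpleModule (MonoidAlgebra ℂ G) ρ.asModule :=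
    (isSemisimpleRepresentation_iff_isSemisimpleModule_asModule ρ).1 inferInstance
  refine isSimpleModule_of_finrank_end_eq_one (k := ℂ) ?_
  rw [← hρ, (IntertwiningMap.equivAlgEnd (ρ := ρ)).toLinearEquiv.finrank_eq]

open scoped ComplexOrder in
-- The average `P` of the forms `A xᴴ * A x` is positive definite and invariant, so `A g⁻¹` is
-- conjugate to `A gᴴ` by `P`.
lemma trace_inv_eq_star_trace [Finite G] {n : Type*} [Fintype n] [DecidableEq n]
    (A : G →* Matrix n n ℂ) (g : G) : (A g⁻¹).trace = star (A g).trace := by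
  have := Fintype.ofFinite G
  let P := ∑ x, (A x).conjTranspose * A x
  have hP_inv : (A g).conjTranspose * P * A g = P := by
    simp only [P, Finset.mul_sum, Finset.sum_mul]
    rw [← Equiv.sum_comp (Equiv.mulRight g) fun x => (A x).conjTranspose * A x]
    simp only [Equiv.coe_mulRight, map_mul, Matrix.conjTranspose_mul, Matrix.mul_assoc]
  have hP_pos : P.PosDef := by
    refine Matrix.posDef_sum Finset.univ_nonempty fun x _ => ?_
    refine Matrix.PosDef.conjTranspose_mul_self _ (Matrix.mulVec_injective_of_isUnit ?_)
    exact (Group.isUnit x).map A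
  have hP_unit : IsUnit P.det := P.isUnit_iff_isUnit_det.1 hP_pos.isUnit
  have hA_inv : A g⁻¹ = P⁻¹ * (A g).conjTranspose * P :=
    calc A g⁻¹ = P⁻¹ * ((A g).conjTranspose * P * A g) * A g⁻¹ := by
          rw [hP_inv, Matrix.nonsing_inv_mul _ hP_unit, one_mul]
      _ = P⁻¹ * (A g).conjTranspose * P * (A g * A g⁻¹) := by simp only [Matrix.mul_assoc]
      _ = P⁻¹ * (A g).conjTranspose * P := by rw [← map_mul, mul_inv_cancel, map_one, mul_one]
  rw [hA_inv, Matrix.trace_mul_comm, ← Matrix.mul_assoc, Matrix.mul_nonsing_inv _ hP_unit,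
    one_mul, Matrix.trace_conjTranspose]

lemma character_inv [Finite G] [FiniteDimensional ℂ V] (ρ : Representation ℂ G V) (g : G) :
    ρ.character g⁻¹ = (starRingEnd ℂ) (ρ.character g) := by
  let b := Module.finBasis ℂ V
  have htrace (x : G) : ρ.character x = (LinearMap.toMatrixAlgEquiv b (ρ x)).trace :=
    LinearMap.trace_eq_matrix_trace ℂ b (ρ x)
  rw [htrace, htrace]
  exact trace_inv_eq_star_trace ((LinearMap.toMatrixAlgEquiv b).toMulEquiv.toMonoidHom.comp ρ) g

variable [FiniteDimensional ℂ V] [FiniteDimensional ℂ W]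

lemma isIrreducible_iff_sum_character [Fintype G] :
    IsIrreducible ρ ↔ ∑ g, ρ.character g * ρ.character g⁻¹ = Nat.card G := by
  rw [isIrreducible_iff_finrank_intertwiningMap, ← Nat.cast_eq_one (R := ℂ),
    ← card_inv_mul_sum_char_mul_char_eq_finrank, inv_mul_eq_one₀ (NeZero.ne _), eq_comm]

lemma sum_character_eq_ite [Fintype G] [IsIrreducible ρ] [IsIrreducible σ] :
    (Nat.card G : ℂ)⁻¹ * ∑ g, ρ.character g * σ.character g⁻¹ =
      if ρ.character = σ.character then 1 else 0 := by
  split_ifs with hchar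
  · rw [← hchar, char_orthonormal, if_pos ⟨Representation.Equiv.refl ρ⟩]
  · rw [char_orthonormal, if_neg]
    rintro ⟨e⟩
    exact hchar (char_iso e).symm

lemma nonempty_equiv_of_character_eq [Finite G] [IsIrreducible ρ] [IsIrreducible σ]
    (hchar : ρ.character = σ.character) : Nonempty (Representation.Equiv ρ σ) := by
  have := Fintype.ofFinite G
  by_contra hempty
  have horth := char_orthonormal σ ρ
  rw [if_neg hempty, sum_character_eq_ite, if_pos hchar.symm] at horth
  exact one_ne_zero horth

end IrreducibleCharacters

section IrrChar

open Representation

variable {G : Type} [Group G]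

lemma simple_iff_isIrreducible [Finite G] (V : FDRep ℂ G) :
    CategoryTheory.Simple V ↔ IsIrreducible (V.ρ : Representation ℂ G V) := by
  have := Fintype.ofFinite G
  rw [FDRep.simple_iff_char_is_norm_one, isIrreducible_iff_sum_character]
  rfl

variable [Fintype G]

lemma isIrrChar_character {X : Type} [AddCommGroup X] [Module ℂ X] [FiniteDimensional ℂ X]
    (ρ : Representation ℂ G X) [hρ : IsIrreducible ρ] : IsIrrChar G ρ.character :=
  ⟨FDRep.of ρ, (simple_iff_isIrreducible _).2 hρ, rfl⟩

lemma finite_setOf_isIrrChar : {α | IsIrrChar G α}.Finite := by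
  let B : (G → ℂ) →ₗ[ℂ] (G → ℂ) →ₗ[ℂ] ℂ := LinearMap.mk₂ ℂ
    (fun φ ψ => (Nat.card G : ℂ)⁻¹ * ∑ g, φ g * ψ g⁻¹)
    (fun φ φ' ψ => by simp only [Pi.add_apply, add_mul, Finset.sum_add_distrib, mul_add])
    (fun c φ ψ => by
      simp only [Pi.smul_apply, smul_eq_mul, mul_assoc, ← Finset.mul_sum,
        mul_left_comm _ c])
    (fun φ ψ ψ' => by simp only [Pi.add_apply, mul_add, Finset.sum_add_distrib])
    (fun c φ ψ => by
      simp only [Pi.smul_apply, smul_eq_mul, mul_left_comm _ c, ← Finset.mul_sum])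
  have horth (α β : {α | IsIrrChar G α}) : B α β = if α = β then 1 else 0 := by
    obtain ⟨_, V, hV, rfl⟩ := α
    obtain ⟨_, W, hW, rfl⟩ := β
    rw [simple_iff_isIrreducible] at hV hW
    refine Eq.trans ?_ (if_congr Subtype.mk_eq_mk.symm rfl rfl)
    exact sum_character_eq_ite (ρ := (V.ρ : Representation ℂ G V))
      (σ := (W.ρ : Representation ℂ G W))
  have hindep : LinearIndependent ℂ (Subtype.val : {α | IsIrrChar G α} → G → ℂ) := by
    refine LinearMap.linearIndependent_of_isOrthoᵢ (B := B) (fun α β hne => ?_) fun α => ?_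
    · exact (horth α β).trans (if_neg hne)
    · rw [horth, if_pos rfl]
      exact one_ne_zero
  exact hindep.setFinite

end IrrChar

section Weights

open Representation
open scoped commutatorElement

variable {G : Type*} [Group G] {L : Subgroup G}

/-- The vectors on which the subgroup `L` acts through the linear character `lam`. -/
noncomputable def weightSpace {V : Type*} [AddCommGroup V] [Module ℂ V]
    (σ : Representation ℂ G V) (lam : L →* ℂˣ) : Submodule ℂ V :=
  ⨅ l : L, Module.End.eigenspace (σ l) (lam l : ℂ)

/-- The linear character `lam` of the subgroup `L` is a weight of the representation `σ`. -/
def HasWeight {V : Type*} [AddCommGroup V] [Module ℂ V] (σ : Representation ℂ G V)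
    (lam : L →* ℂˣ) : Prop :=
  weightSpace σ lam ≠ ⊥

/-- The linear characters of a subgroup, written additively so that a group normalizing the
subgroup acts on them `ℤ`-linearly. -/
abbrev LinearDual (L : Subgroup G) : Type _ := Additive (L →* ℂˣ)

noncomputable instance (L : Subgroup G) : AddCommGroup (LinearDual L) :=
  Additive.addCommGroup

/-- The conjugation action of the group on the linear characters of a normal subgroup. -/
noncomputable def dualRep (L : Subgroup G) [L.Normal] : Representation ℤ G (LinearDual L) where
  toFun g := (MonoidHom.toAdditive
    (MonoidHom.compHom' (MulAut.conjNormal (H := L) g⁻¹).toMonoidHom)).toIntLinearMap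
  map_one' := by
    refine LinearMap.ext fun lam => MonoidHom.ext fun l => ?_
    change lam.toMul (MulAut.conjNormal (1 : G)⁻¹ l) = lam.toMul l
    rw [inv_one, map_one, MulAut.one_apply]
  map_mul' x y := by
    refine LinearMap.ext fun lam => MonoidHom.ext fun l => ?_
    change lam.toMul (MulAut.conjNormal (x * y)⁻¹ l) =
      lam.toMul (MulAut.conjNormal y⁻¹ (MulAut.conjNormal x⁻¹ l))
    rw [mul_inv_rev, map_mul, MulAut.mul_apply]

lemma dualRep_apply [L.Normal] (g : G) (lam : LinearDual L) (l : L) :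
    (dualRep L g lam).toMul l = lam.toMul (MulAut.conjNormal g⁻¹ l) :=
  rfl

lemma toMul_conjNormal_of_dualRep_eq [L.Normal] {g : G} {lam : LinearDual L}
    (hg : dualRep L g lam = lam) (l : L) :
    lam.toMul (MulAut.conjNormal g l) = lam.toMul l := by
  conv_lhs => rw [← hg, dualRep_apply, map_inv, MulAut.inv_apply_self]

variable {V : Type*} [AddCommGroup V] [Module ℂ V] {σ : Representation ℂ G V} {lam mu : L →* ℂˣ}

lemma mem_weightSpace {v : V} : v ∈ weightSpace σ lam ↔ ∀ l : L, σ l v = (lam l : ℂ) • v := by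
  simp only [weightSpace, Submodule.mem_iInf, Module.End.mem_eigenspace_iff]

lemma disjoint_weightSpace (hne : lam ≠ mu) :
    Disjoint (weightSpace σ lam) (weightSpace σ mu) := by
  rw [Submodule.disjoint_def]
  intro v hlam hmu
  obtain ⟨l, hl⟩ := DFunLike.ne_iff.1 hne
  have hsmul : (lam l - mu l : ℂ) • v = 0 := by
    rw [sub_smul, ← mem_weightSpace.1 hlam, ← mem_weightSpace.1 hmu, sub_self]
  refine (smul_eq_zero.1 hsmul).resolve_left fun hzero => hl ?_
  exact Units.ext (sub_eq_zero.1 hzero)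

lemma translate_weightSpace_le [L.Normal] (g : G) :
    translate σ g (weightSpace σ lam) ≤
      weightSpace σ (dualRep L g (Additive.ofMul lam)).toMul := by
  rintro _ ⟨v, hv, rfl⟩
  refine mem_weightSpace.2 fun l => ?_
  rw [dualRep_apply, toMul_ofMul, ← map_smul, ← mem_weightSpace.1 hv, ← Module.End.mul_apply,
    ← Module.End.mul_apply, ← map_mul, ← map_mul, MulAut.conjNormal_apply]
  congr 2
  group

lemma translate_weightSpace [L.Normal] (g : G) :
    translate σ g (weightSpace σ lam) =
      weightSpace σ (dualRep L g (Additive.ofMul lam)).toMul := by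
  refine (translate_weightSpace_le g).antisymm ?_
  have hle := translate_weightSpace_le (σ := σ)
    (lam := (dualRep L g (Additive.ofMul lam)).toMul) g⁻¹
  rwa [← (translate σ g).le_iff_le, translate_translate_inv, ofMul_toMul,
    Representation.inv_self_apply, toMul_ofMul] at hle

lemma dualRep_eq_of_le_weightSpace [L.Normal] {X : Submodule ℂ V} (hX : X ≠ ⊥)
    (hle : X ≤ weightSpace σ lam) {g : G} (hg : g ∈ stabilizer σ X) :
    dualRep L g (Additive.ofMul lam) = Additive.ofMul lam := by
  by_contra hne
  refine hX (disjoint_self.1 ((disjoint_weightSpace hne).mono ?_ hle))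
  rw [← mem_stabilizer.1 hg]
  exact ((translate σ g).monotone hle).trans (translate_weightSpace g).le

lemma exists_mem_weightSpace {v : V} (hv0 : v ≠ 0) (hv : ∀ l : L, ∃ a : ℂ, σ l v = a • v) :
    ∃ lam : L →* ℂˣ, v ∈ weightSpace σ lam := by
  choose a ha using hv
  have hinj : Function.Injective fun b : ℂ => b • v := smul_left_injective ℂ hv0
  let eigenvalue : L →* ℂ :=
    { toFun := a
      map_one' := hinj <| by
        change a 1 • v = (1 : ℂ) • v
        rw [← ha, Subgroup.coe_one, map_one, Module.End.one_apply, one_smul]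
      map_mul' := fun l m => hinj <| by
        change a (l * m) • v = (a l * a m) • v
        rw [← ha, Subgroup.coe_mul, map_mul, Module.End.mul_apply, ha m, map_smul, ha l, smul_smul,
          mul_comm] }
  exact ⟨eigenvalue.toHomUnits, mem_weightSpace.2 ha⟩

/-- Up to the factor `|L|`, the projection onto the weight space of `lam`. -/
noncomputable def weightProjection [Fintype L] (σ : Representation ℂ G V) (lam : L →* ℂˣ) :
    V →ₗ[ℂ] V :=
  ∑ l : L, ((lam l)⁻¹ : ℂˣ).1 • σ l

section WeightProjection

variable [Fintype L]

lemma weightProjection_apply_of_mem {v : V} (hv : v ∈ weightSpace σ lam) :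
    weightProjection σ lam v = (Fintype.card L : ℂ) • v := by
  simp only [weightProjection, LinearMap.sum_apply, LinearMap.smul_apply, mem_weightSpace.1 hv,
    smul_smul, Units.inv_mul, one_smul, Finset.sum_const, Finset.card_univ,
    Nat.cast_smul_eq_nsmul]

lemma weightProjection_mem_of_apply_mem {W : Submodule ℂ V} {v : V}
    (hv : ∀ l : L, σ l v ∈ W) : weightProjection σ lam v ∈ W := by
  simp only [weightProjection, LinearMap.sum_apply, LinearMap.smul_apply]
  exact W.sum_mem fun l _ => W.smul_mem _ (hv l)

lemma weightProjection_mem_weightSpace (v : V) :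
    weightProjection σ lam v ∈ weightSpace σ lam := by
  refine mem_weightSpace.2 fun l => ?_
  simp only [weightProjection, LinearMap.sum_apply, LinearMap.smul_apply, map_sum, map_smul,
    Finset.smul_sum]
  rw [← Equiv.sum_comp (Equiv.mulLeft l) fun m : L => (lam l : ℂ) • ((lam m)⁻¹ : ℂˣ).1 • σ m v]
  refine Finset.sum_congr rfl fun m _ => ?_
  rw [Equiv.coe_mulLeft, smul_smul, ← Units.val_mul, map_mul lam, mul_inv_rev, mul_comm (lam m)⁻¹,
    mul_inv_cancel_left, Subgroup.coe_mul, map_mul, Module.End.mul_apply]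

lemma weightSpace_le_ker_weightProjection (hne : lam ≠ mu) :
    weightSpace σ lam ≤ LinearMap.ker (weightProjection σ mu) := by
  intro v hv
  refine Submodule.disjoint_def.1 (disjoint_weightSpace hne) _ ?_
    (weightProjection_mem_weightSpace v)
  refine weightProjection_mem_of_apply_mem fun l => ?_
  rw [mem_weightSpace.1 hv]
  exact Submodule.smul_mem _ _ hv

end WeightProjection

lemma HasWeight.isBlock_weightSpace [Finite L] [L.Normal] (hlam : HasWeight σ lam) :
    IsBlock σ (weightSpace σ lam) := by
  have := Fintype.ofFinite L
  refine ⟨hlam, ?_⟩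
  have hle : otherTranslates σ (weightSpace σ lam) (weightSpace σ lam) ≤
      LinearMap.ker (weightProjection σ lam) := by
    refine iSup₂_le fun g hg => ?_
    rw [translate_weightSpace] at hg ⊢
    exact weightSpace_le_ker_weightProjection fun heq => hg (by rw [heq])
  refine Submodule.disjoint_def.2 fun v hv hother => ?_
  have hzero := LinearMap.mem_ker.1 (hle hother)
  rw [weightProjection_apply_of_mem hv] at hzero
  exact (smul_eq_zero.1 hzero).resolve_left (Nat.cast_ne_zero.2 Fintype.card_ne_zero)

lemma exists_dualRep_eq_of_hasWeight [Finite L] [L.Normal]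
    [IsIrreducible σ] (hlam : HasWeight σ lam) (hmu : HasWeight σ mu) :
    ∃ g, dualRep L g (Additive.ofMul lam) = Additive.ofMul mu := by
  have := Fintype.ofFinite L
  by_contra! hne
  obtain ⟨w, hw, hw0⟩ := Submodule.exists_mem_ne_zero_of_ne_bot hmu
  have hker : LinearMap.ker (weightProjection σ mu) = ⊤ := by
    rw [eq_top_iff, ← iSup_translate_eq_top (ρ := σ) hlam]
    refine iSup_le fun g => (translate_weightSpace_le g).trans ?_
    exact weightSpace_le_ker_weightProjection fun heq => hne g (congrArg Additive.ofMul heq)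
  have hzero : weightProjection σ mu w = 0 := LinearMap.mem_ker.1 (hker ▸ Submodule.mem_top)
  rw [weightProjection_apply_of_mem hw] at hzero
  exact smul_ne_zero (Nat.cast_ne_zero.2 Fintype.card_ne_zero) hw0 hzero

lemma HasWeight.le_ker [IsIrreducible σ] {K : Subgroup G} [K.Normal] (hlam : HasWeight σ lam)
    (hKL : K ≤ L) (hK : K.subgroupOf L ≤ lam.ker) : K ≤ MonoidHom.ker σ := by
  refine le_ker_of_forall_apply_eq hlam fun k hk v hv => ?_
  have hmem : (⟨k, hKL hk⟩ : L) ∈ lam.ker := hK (Subgroup.mem_subgroupOf.2 hk)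
  have happly := mem_weightSpace.1 hv ⟨k, hKL hk⟩
  rwa [MonoidHom.mem_ker.1 hmem, Units.val_one, one_smul] at happly

lemma HasWeight.not_le_ker (hlam : HasWeight σ lam) (hne : lam ≠ 1) : ¬ L ≤ MonoidHom.ker σ := by
  intro hker
  refine hlam (disjoint_self.1 ((disjoint_weightSpace (σ := σ) hne).mono_right fun v _ => ?_))
  refine mem_weightSpace.2 fun l => ?_
  rw [MonoidHom.mem_ker.1 (hker l.2), MonoidHom.one_apply, Units.val_one, one_smul,
    Module.End.one_apply]

lemma HasWeight.of_equiv {W : Type*} [AddCommGroup W] [Module ℂ W] {τ : Representation ℂ G W}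
    (e : Representation.Equiv σ τ) (hlam : HasWeight σ lam) : HasWeight τ lam := by
  obtain ⟨v, hv, hv0⟩ := Submodule.exists_mem_ne_zero_of_ne_bot hlam
  refine Submodule.ne_bot_iff _ |>.2 ⟨e.toLinearEquiv v, mem_weightSpace.2 fun l => ?_, ?_⟩
  · rw [← map_smul, ← mem_weightSpace.1 hv]
    exact (LinearMap.congr_fun (e.isIntertwining' l) v).symm
  · rwa [ne_eq, LinearEquiv.map_eq_zero_iff]

lemma isIrreducible_toRepresentation_of_isAtom {R : Subrepresentation σ} (hR : IsAtom R) :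
    IsIrreducible R.toRepresentation := by
  have hinj : Function.Injective (Submodule.map R.toSubmodule.subtype) :=
    Submodule.map_injective_of_injective R.toSubmodule.injective_subtype
  have : Nontrivial R.toSubmodule := by
    rw [Submodule.nontrivial_iff_ne_bot]
    exact fun hbot => hR.1 (Subrepresentation.toSubmodule_injective hbot)
  refine { exists_pair_ne := ⟨⊥, ⊤, fun heq => ?_⟩, eq_bot_or_eq_top := fun W => ?_ }
  · exact bot_ne_top (congrArg Subrepresentation.toSubmodule heq)
  · let image : Subrepresentation σ := ⟨W.toSubmodule.map R.toSubmodule.subtype, by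
      rintro g _ ⟨w, hw, rfl⟩
      exact ⟨_, W.apply_mem_toSubmodule g hw, rfl⟩⟩
    have hle : image ≤ R := Submodule.map_subtype_le R.toSubmodule W.toSubmodule
    refine (hR.le_iff.1 hle).imp (fun hbot => ?_) fun htop => ?_
    · refine Subrepresentation.toSubmodule_injective (hinj ?_)
      exact (congrArg Subrepresentation.toSubmodule hbot).trans (Submodule.map_bot _).symm
    · refine Subrepresentation.toSubmodule_injective (hinj ?_)
      exact (congrArg Subrepresentation.toSubmodule htop).trans
        (Submodule.map_subtype_top R.toSubmodule).symm

lemma exists_isIrreducible_apply_ne_zero [Finite G] (σ : Representation ℂ G V) {f : V →ₗ[ℂ] V}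
    (hf : f ≠ 0) :
    ∃ R : Subrepresentation σ, IsIrreducible R.toRepresentation ∧ ∃ v ∈ R, f v ≠ 0 := by
  by_contra! hzero
  have : IsSemisimpleModule (MonoidAlgebra ℂ G) σ.asModule :=
    (isSemisimpleRepresentation_iff_isSemisimpleModule_asModule σ).1 inferInstance
  refine hf (LinearMap.ext fun v => ?_)
  have hv : σ.asModuleEquiv.symm v ∈
      sSup {R : Submodule (MonoidAlgebra ℂ G) σ.asModule | IsSimpleModule (MonoidAlgebra ℂ G) R} :=
    IsSemisimpleModule.sSup_simples_eq_top (MonoidAlgebra ℂ G) σ.asModule ▸ Submodule.mem_top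
  rw [sSup_eq_iSup'] at hv
  refine Submodule.iSup_induction _ (motive := fun w => f (σ.asModuleEquiv w) = 0) hv
    (fun R w hw => ?_) (by rw [map_zero, map_zero]) fun x y hx hy => ?_
  · let iso := Subrepresentation.subrepresentationSubmoduleOrderIso (ρ := σ)
    have hatom : IsAtom (iso.symm R) :=
      (OrderIso.isAtom_iff iso.symm _).2 (isSimpleModule_iff_isAtom.1 R.2)
    exact hzero (iso.symm R) (isIrreducible_toRepresentation_of_isAtom hatom) w hw
  · rw [map_add, map_add, hx, hy, add_zero]

lemma exists_hasWeight_of_commutator_le_ker [Finite L] [Nontrivial V] [FiniteDimensional ℂ V]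
    (hL : ⁅L, L⁆ ≤ MonoidHom.ker σ) : ∃ lam : L →* ℂˣ, HasWeight σ lam := by
  obtain ⟨R, hR, v, hv, hv0⟩ :=
    exists_isIrreducible_apply_ne_zero (σ.comp L.subtype) (f := LinearMap.id) one_ne_zero
  have hcomm (l m : L) : σ l * σ m = σ m * σ l := by
    have hmem : ⁅(l : G), (m : G)⁆ ∈ MonoidHom.ker σ :=
      hL (Subgroup.commutator_mem_commutator l.2 m.2)
    have hmul : (l : G) * m = ⁅(l : G), (m : G)⁆ * (m * l) := by group
    rw [← map_mul, hmul, map_mul, MonoidHom.mem_ker.1 hmem, one_mul, map_mul]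
  obtain ⟨lam, hlam⟩ := exists_mem_weightSpace (σ := σ) hv0 fun l => by
    let intertwiner : IntertwiningMap R.toRepresentation R.toRepresentation :=
      LinearMap.intertwiningMap_of_isIntertwiningMap _ _ (R.toRepresentation l) fun m w =>
        Subtype.ext (LinearMap.congr_fun (hcomm l m) w)
    obtain ⟨a, ha⟩ :=
      IsIrreducible.algebraMap_intertwiningMap_bijective_of_isAlgClosed.2 intertwiner
    exact ⟨a, (congrArg (fun f => (f.toLinearMap ⟨v, hv⟩ : V)) ha).symm⟩
  exact ⟨lam, (Submodule.ne_bot_iff _).2 ⟨v, hlam, hv0⟩⟩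

lemma HasWeight.exists_isIrreducible [Finite G] (hlam : HasWeight σ lam) :
    ∃ R : Subrepresentation σ, IsIrreducible R.toRepresentation ∧
      HasWeight R.toRepresentation lam := by
  have := Fintype.ofFinite L
  obtain ⟨w, hw, hw0⟩ := Submodule.exists_mem_ne_zero_of_ne_bot hlam
  have hproj : weightProjection σ lam ≠ 0 := fun hzero => by
    refine smul_ne_zero (Nat.cast_ne_zero.2 Fintype.card_ne_zero) hw0
      ((weightProjection_apply_of_mem hw).symm.trans ?_)
    rw [hzero, LinearMap.zero_apply]
  obtain ⟨R, hR, v, hv, hv0⟩ := exists_isIrreducible_apply_ne_zero σ hproj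
  have hmem : weightProjection σ lam v ∈ R.toSubmodule :=
    weightProjection_mem_of_apply_mem fun l => R.apply_mem_toSubmodule l hv
  refine ⟨R, hR, (Submodule.ne_bot_iff _).2 ⟨⟨_, hmem⟩, mem_weightSpace.2 fun l => ?_, ?_⟩⟩
  · exact Subtype.ext (mem_weightSpace.1 (weightProjection_mem_weightSpace v) l)
  · exact fun hzero => hv0 (congrArg Subtype.val hzero)

end Weights

section CharacterWeights

open Representation

variable {G : Type} [Group G]

lemma le_ker_iff_subset_charKer [Finite G] {V : Type*} [AddCommGroup V] [Module ℂ V]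
    [FiniteDimensional ℂ V] {ρ : Representation ℂ G V} {K : Subgroup G} :
    K ≤ MonoidHom.ker ρ ↔ (K : Set G) ⊆ charKer G ρ.character := by
  have := Fintype.ofFinite K
  refine ⟨fun hK k hk => ?_, fun hK k hk => ?_⟩
  · exact congrArg (LinearMap.trace ℂ V) ((MonoidHom.mem_ker.1 (hK hk)).trans (map_one ρ).symm)
  -- The average of the character over `K` is the dimension of the space of `K`-invariants.
  · have hinv : invariants (ρ.comp K.subtype) = ⊤ := by
      refine Submodule.eq_top_of_finrank_eq (Nat.cast_injective (R := ℂ) ?_)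
      rw [← card_inv_mul_sum_char_eq_finrank, ← ρ.char_one, inv_mul_eq_iff_eq_mul₀ (NeZero.ne _)]
      refine (Finset.sum_congr rfl fun k _ => hK k.2).trans ?_
      rw [Finset.sum_const, Finset.card_univ, ← Nat.card_eq_fintype_card, nsmul_eq_mul]
    refine LinearMap.ext fun v => ?_
    exact (mem_invariants _ v).1 (hinv ▸ Submodule.mem_top) ⟨k, hk⟩

/-- The linear character `lam` of the subgroup `L` is a weight of the irreducible representation
with character `α`. -/
def CharHasWeight (α : G → ℂ) {L : Subgroup G} (lam : L →* ℂˣ) : Prop :=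
  ∃ V : FDRep ℂ G, IsIrreducible (V.ρ : Representation ℂ G V) ∧ V.character = α ∧
    HasWeight (V.ρ : Representation ℂ G V) lam

variable {α : G → ℂ} {L : Subgroup G} {lam mu : L →* ℂˣ}

lemma CharHasWeight.subset_charKer [Finite G] {K : Subgroup G} [K.Normal]
    (hlam : CharHasWeight α lam) (hKL : K ≤ L) (hK : K.subgroupOf L ≤ lam.ker) :
    (K : Set G) ⊆ charKer G α := by
  obtain ⟨V, hV, rfl, hweight⟩ := hlam
  exact le_ker_iff_subset_charKer.1 (hweight.le_ker hKL hK)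

lemma CharHasWeight.not_subset_charKer [Finite G] (hlam : CharHasWeight α lam) (hne : lam ≠ 1) :
    ¬ (L : Set G) ⊆ charKer G α := by
  obtain ⟨V, _, rfl, hweight⟩ := hlam
  exact fun hL => hweight.not_le_ker hne (le_ker_iff_subset_charKer.2 hL)

lemma CharHasWeight.exists_dualRep_eq [Finite G] [L.Normal] (hlam : CharHasWeight α lam)
    (hmu : CharHasWeight α mu) : ∃ g, dualRep L g (Additive.ofMul lam) = Additive.ofMul mu := by
  obtain ⟨V, hV, rfl, hVweight⟩ := hlam
  obtain ⟨W, hW, hWV, hWweight⟩ := hmu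
  obtain ⟨e⟩ := nonempty_equiv_of_character_eq (ρ := (W.ρ : Representation ℂ G W))
    (σ := (V.ρ : Representation ℂ G V)) hWV
  exact exists_dualRep_eq_of_hasWeight hVweight (hWweight.of_equiv e)

variable [Fintype G]

/-- The nonprincipal irreducible constituents of `χ * conj χ`, so that `η(χ)` is their number. -/
def etaConstituents (χ : G → ℂ) : Set (G → ℂ) :=
  {α | IsIrrChar G α ∧ α ≠ (fun _ => 1) ∧
    charInner G (fun g => χ g * (starRingEnd ℂ) (χ g)) α ≠ 0}

lemma finite_etaConstituents (χ : G → ℂ) : (etaConstituents χ).Finite :=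
  finite_setOf_isIrrChar.subset fun _ hα => hα.1

lemma charInner_mul_conj_ne_zero_of_subrepresentation {V : Type*} [AddCommGroup V] [Module ℂ V]
    [FiniteDimensional ℂ V] {ρ : Representation ℂ G V} (R : Subrepresentation (linHom ρ ρ))
    [Nontrivial R.toSubmodule] :
    charInner G (fun g => ρ.character g * (starRingEnd ℂ) (ρ.character g))
      R.toRepresentation.character ≠ 0 := by
  have hinner : charInner G (fun g => ρ.character g * (starRingEnd ℂ) (ρ.character g))
      R.toRepresentation.character =
        Module.finrank ℂ (IntertwiningMap R.toRepresentation (linHom ρ ρ)) := by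
    rw [← card_inv_mul_sum_char_mul_char_eq_finrank, charInner, Nat.card_eq_fintype_card]
    simp only [char_linHom, character_inv, mul_comm ((starRingEnd ℂ) (ρ.character _))]
  have : Module.Finite ℂ (IntertwiningMap R.toRepresentation (linHom ρ ρ)) :=
    Module.Finite.equiv (invariantsEquivIntertwiningMap R.toRepresentation (linHom ρ ρ))
  let inclusion : IntertwiningMap R.toRepresentation (linHom ρ ρ) :=
    LinearMap.intertwiningMap_of_isIntertwiningMap R.toRepresentation (linHom ρ ρ)
      R.toSubmodule.subtype fun _ _ => rfl
  have hinclusion : inclusion ≠ 0 := fun hzero => by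
    obtain ⟨v, hv⟩ := exists_ne (0 : R.toSubmodule)
    exact hv (Subtype.ext (congrArg (fun f => f.toLinearMap v) hzero))
  rw [hinner, Nat.cast_ne_zero]
  exact (Module.finrank_pos_iff_exists_ne_zero.2 ⟨inclusion, hinclusion⟩).ne'

lemma exists_mem_etaConstituents_of_hasWeight {V : Type} [AddCommGroup V] [Module ℂ V]
    [FiniteDimensional ℂ V] {ρ : Representation ℂ G V} (hne : lam ≠ 1)
    (hlam : HasWeight (linHom ρ ρ) lam) :
    ∃ α ∈ etaConstituents ρ.character, CharHasWeight α lam := by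
  obtain ⟨R, hR, hweight⟩ := hlam.exists_isIrreducible
  have : Nontrivial R.toSubmodule := nontrivial_of_isSimpleOrder (ρ := R.toRepresentation)
  have hchar : CharHasWeight R.toRepresentation.character lam :=
    ⟨FDRep.of R.toRepresentation, hR, rfl, hweight⟩
  refine ⟨_, ⟨isIrrChar_character _, fun hone => ?_,
    charInner_mul_conj_ne_zero_of_subrepresentation R⟩, hchar⟩
  exact hchar.not_subset_charKer hne fun l _ => by rw [hone]; rfl

end CharacterWeights

section MinimalInvariantSubmodules

variable {R : Type*} [CommRing R] {G : Type*} [Group G] {M : Type*} [AddCommGroup M] [Module R M]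
  {ρ : Representation R G M} {N : Subgroup G} {X : Submodule R M}

lemma le_stabilizer_of_forall_translate_le (h : ∀ n ∈ N, translate ρ n X ≤ X) :
    N ≤ stabilizer ρ X := by
  intro n hn
  refine mem_stabilizer.2 ((h n hn).antisymm ?_)
  rw [← (translate ρ n⁻¹).le_iff_le, translate_inv_translate]
  exact h n⁻¹ (N.inv_mem hn)

lemma mem_stabilizer_of_minimal [N.Normal]
    (hX : Minimal (fun W => W ≠ ⊥ ∧ N ≤ stabilizer ρ W) X) {g : G} {v : M} (hv : v ∈ X)
    (hv0 : v ≠ 0) (hg : ρ g v ∈ X) : g ∈ stabilizer ρ X := by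
  have le_translate (g : G) (v : M) (hv : v ∈ X) (hv0 : v ≠ 0) (hg : ρ g v ∈ X) :
      X ≤ translate ρ g X := by
    refine (hX.2 ⟨?_, fun n hn => ?_⟩ inf_le_left).trans inf_le_right
    · refine (Submodule.ne_bot_iff _).2 ⟨ρ g v, ⟨hg, apply_mem_translate hv⟩, fun h => hv0 ?_⟩
      exact (ρ.apply_bijective g).injective (h.trans (map_zero _).symm)
    · have hconj : g⁻¹ * n * g ∈ stabilizer ρ X :=
        hX.1.2 (by simpa using ‹N.Normal›.conj_mem n hn g⁻¹)
      have hmul : n * g = g * (g⁻¹ * n * g) := by group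
      rw [mem_stabilizer, map_inf, mem_stabilizer.1 (hX.1.2 hn), ← translate_mul_apply, hmul,
        translate_mul_apply, mem_stabilizer.1 hconj]
  refine mem_stabilizer.2 (le_antisymm ?_ (le_translate g v hv hv0 hg))
  have hle := le_translate g⁻¹ (ρ g v) hg (fun h => hv0 ?_) (by rwa [ρ.inv_self_apply])
  · rwa [← (translate ρ g).le_iff_le, translate_translate_inv] at hle
  · exact (ρ.apply_bijective g).injective (h.trans (map_zero _).symm)

lemma isSimpleOrder_stabilizerRep_of_minimal
    (hX : Minimal (fun W => W ≠ ⊥ ∧ N ≤ stabilizer ρ W) X) :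
    IsSimpleOrder (Subrepresentation (stabilizerRep ρ X)) := by
  have : Nontrivial X := Submodule.nontrivial_iff_ne_bot.2 hX.1.1
  have hinj := Submodule.map_injective_of_injective X.injective_subtype
  refine { exists_pair_ne := ⟨⊥, ⊤, fun heq => ?_⟩, eq_bot_or_eq_top := fun U => ?_ }
  · exact bot_ne_top (congrArg Subrepresentation.toSubmodule heq)
  · refine or_iff_not_imp_left.2 fun hU => ?_
    refine Subrepresentation.toSubmodule_injective (hinj ?_)
    refine Eq.trans ?_ (Submodule.map_subtype_top X).symm
    refine (Submodule.map_subtype_le X _).antisymm (hX.2 ⟨fun hbot => hU ?_, ?_⟩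
      (Submodule.map_subtype_le X _))
    · exact Subrepresentation.toSubmodule_injective (hinj (hbot.trans (Submodule.map_bot _).symm))
    · refine le_stabilizer_of_forall_translate_le fun n hn => ?_
      rw [← map_subtype_translate_stabilizerRep ⟨n, hX.1.2 hn⟩]
      refine Submodule.map_mono ?_
      rintro _ ⟨u, hu, rfl⟩
      exact U.apply_mem_toSubmodule _ hu

end MinimalInvariantSubmodules

section DualOfChiefFactor

variable {G : Type*} [Group G]

lemma exists_ne_zero_forall_derivedSeriesOf_apply_eq [Finite G] [Group.IsSolvable G]
    {V ι : Type*} [AddCommGroup V] [Finite V] {ρ : Representation ℤ G V} {N : Subgroup G} [N.Normal]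
    {W : Submodule ℤ V} (hW : W ≠ ⊥) (hWN : N ≤ stabilizer ρ W) {S : Finset ι}
    {label : ι → V → Prop} (hlabel : ∀ i v w, label i v → label i w → ∃ g, ρ g v = w)
    (hS : ∀ v ∈ W, v ≠ 0 → ∃ i ∈ S, label i v) :
    ∃ v ∈ W, v ≠ 0 ∧ ∀ x ∈ derivedSeriesOf N (10 * S.card + orbitConstant), ρ x v = v := by
  obtain ⟨X, hXW, hX⟩ := exists_minimal_le_of_wellFoundedLT
    (fun W => W ≠ ⊥ ∧ N ≤ stabilizer ρ W) W ⟨hW, hWN⟩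
  have := isSimpleOrder_stabilizerRep_of_minimal hX
  obtain ⟨T, hTS, hT⟩ := exists_coversNonzeroOrbits_stabilizerRep
    (fun g v => mem_stabilizer_of_minimal hX) hlabel fun v hv => hS v (hXW hv)
  have hker := derivedSeriesOf_top_le_ker_of_coversNonzeroOrbits hT
  obtain ⟨v, hv, hv0⟩ := Submodule.exists_mem_ne_zero_of_ne_bot hX.1.1
  refine ⟨v, hXW hv, hv0, fun x hx => ?_⟩
  have hle : derivedSeriesOf N (10 * S.card + orbitConstant) ≤
      (derivedSeriesOf ⊤ (10 * T.card + orbitConstant)).map (stabilizer ρ X).subtype := by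
    rw [map_subtype_derivedSeriesOf_top]
    exact (derivedSeriesOf_mono hX.1.2 _).trans (derivedSeriesOf_antitone _ (by lia))
  obtain ⟨y, hy, rfl⟩ := hle hx
  exact congrArg Subtype.val (LinearMap.congr_fun (MonoidHom.mem_ker.1 (hker hy)) ⟨v, hv⟩)

lemma commutator_subgroupOf_le_ker_of_dualRep_eq {L D : Subgroup G} [L.Normal] {lam : LinearDual L}
    (hD : ∀ x ∈ D, dualRep L x lam = lam) : ⁅D, L⁆.subgroupOf L ≤ lam.toMul.ker := by
  rw [← Subgroup.map_subtype_le_map_subtype, Subgroup.subgroupOf_map_subtype]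
  refine inf_le_left.trans (Subgroup.commutator_le.2 fun x hx l hl => ?_)
  refine ⟨MulAut.conjNormal x ⟨l, hl⟩ * ⟨l, hl⟩⁻¹, ?_, rfl⟩
  rw [SetLike.mem_coe, MonoidHom.mem_ker, map_mul, map_inv,
    toMul_conjNormal_of_dualRep_eq (hD x hx), mul_inv_cancel]

lemma IsChiefFactor.commutator_le_of_dualRep_eq {K L D : Subgroup G} [L.Normal] [D.Normal]
    (h : IsChiefFactor K L) {lam : LinearDual L} (hlam : lam ≠ 0)
    (hK : K.subgroupOf L ≤ lam.toMul.ker) (hD : ∀ x ∈ D, dualRep L x lam = lam) : ⁅D, L⁆ ≤ K := by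
  have := h.normal_bot
  refine le_sup_left.trans ((h.eq_or_eq (⁅D, L⁆ ⊔ K) inferInstance le_sup_right
    (sup_le (Subgroup.commutator_le_right D L) h.lt.le)).resolve_right fun htop => hlam ?_).le
  have hker : (⁅D, L⁆ ⊔ K).subgroupOf L ≤ lam.toMul.ker := by
    rw [Subgroup.subgroupOf_sup (Subgroup.commutator_le_right D L) h.lt.le]
    exact sup_le (commutator_subgroupOf_le_ker_of_dualRep_eq hD) hK
  rw [htop, Subgroup.subgroupOf_self, top_le_iff] at hker
  exact MonoidHom.ker_eq_top_iff.1 hker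

instance [Finite G] (L : Subgroup G) : Finite (LinearDual L) :=
  inferInstanceAs (Finite (L →* ℂˣ))

end DualOfChiefFactor

lemma IsChiefFactor.commutator_derivedSeriesOf_le_of_charHasWeight {G : Type} [Group G] [Finite G]
    [Group.IsSolvable G] {K L N : Subgroup G} [L.Normal] [N.Normal] (h : IsChiefFactor K L)
    {W : Submodule ℤ (LinearDual L)} (hW : W ≠ ⊥) (hWN : N ≤ stabilizer (dualRep L) W)
    (hWK : ∀ lam ∈ W, K.subgroupOf L ≤ lam.toMul.ker) {S : Finset (G → ℂ)}
    (hS : ∀ lam ∈ W, lam ≠ 0 → ∃ α ∈ S, CharHasWeight α lam.toMul) :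
    ⁅derivedSeriesOf N (10 * S.card + orbitConstant), L⁆ ≤ K := by
  obtain ⟨lam, hlam, hlam0, hfix⟩ := exists_ne_zero_forall_derivedSeriesOf_apply_eq hW hWN
    (label := fun α lam => CharHasWeight α lam.toMul)
    (fun _ _ _ => CharHasWeight.exists_dualRep_eq) hS
  exact h.commutator_le_of_dualRep_eq hlam0 (hWK lam hlam) hfix

section Annihilator

variable {G : Type*} [Group G] {L U : Subgroup G}

/-- The linear characters of `L` that are trivial on `L ⊓ U`. -/
noncomputable def annihilator (L U : Subgroup G) : Submodule ℤ (LinearDual L) :=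
  LinearMap.ker (MonoidHom.toAdditive
    (MonoidHom.compHom' (M := U.subgroupOf L) (P := ℂˣ) (U.subgroupOf L).subtype)).toIntLinearMap

lemma mem_annihilator {lam : LinearDual L} :
    lam ∈ annihilator L U ↔ U.subgroupOf L ≤ lam.toMul.ker :=
  ⟨fun h l hl => DFunLike.congr_fun (congrArg Additive.toMul (LinearMap.mem_ker.1 h))
    (⟨l, hl⟩ : U.subgroupOf L),
    fun h => LinearMap.mem_ker.2 (MonoidHom.ext fun l => h l.2)⟩

lemma normalizer_inf_le_stabilizer_annihilator [L.Normal] :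
    Subgroup.normalizer ((L ⊓ U : Subgroup G) : Set G) ≤
      stabilizer (dualRep L) (annihilator L U) := by
  refine le_stabilizer_of_forall_translate_le fun n hn => ?_
  rintro _ ⟨lam, hlam, rfl⟩
  refine mem_annihilator.2 fun l hl => ?_
  rw [MonoidHom.mem_ker, dualRep_apply]
  refine mem_annihilator.1 hlam (Subgroup.mem_subgroupOf.2 ?_)
  rw [MulAut.conjNormal_apply]
  exact ((Subgroup.mem_normalizer_iff.1 (inv_mem hn) l).1 ⟨l.2, hl⟩).2

lemma annihilator_ne_bot [Finite G] (hLL : ⁅L, L⁆ ≤ U) (hLU : ¬ L ≤ U) : annihilator L U ≠ ⊥ := by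
  have hcomm : commutator L ≤ U.subgroupOf L := by
    rw [← Subgroup.map_subtype_le_map_subtype, Subgroup.map_subtype_commutator,
      Subgroup.subgroupOf_map_subtype]
    exact le_inf hLL (Subgroup.commutator_le_self L)
  have := Subgroup.Normal.of_commutator_le _ hcomm
  let : CommGroup (L ⧸ U.subgroupOf L) :=
    { mul_comm := (Subgroup.Normal.quotient_commutative_iff_commutator_le.2 hcomm).is_comm.comm }
  obtain ⟨l, hlL, hlU⟩ := SetLike.not_le_iff_exists.1 hLU
  have : NeZero (Monoid.exponent (L ⧸ U.subgroupOf L) : ℂ) :=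
    ⟨Nat.cast_ne_zero.2 Monoid.exponent_ne_zero_of_finite⟩
  obtain ⟨φ, hφ⟩ := CommGroup.exists_apply_ne_one_of_hasEnoughRootsOfUnity (L ⧸ U.subgroupOf L) ℂ
    (a := ((⟨l, hlL⟩ : L) : L ⧸ U.subgroupOf L)) fun h =>
      hlU (Subgroup.mem_subgroupOf.1 ((QuotientGroup.eq_one_iff _).1 h))
  refine (Submodule.ne_bot_iff _).2
    ⟨Additive.ofMul (φ.comp (QuotientGroup.mk' _)), mem_annihilator.2 fun m hm => ?_, fun h => ?_⟩
  · exact (congrArg φ ((QuotientGroup.eq_one_iff m).2 hm)).trans (map_one φ)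
  · exact hφ (DFunLike.congr_fun (congrArg Additive.toMul h) ⟨l, hlL⟩)

end Annihilator

section WeightsOfEndomorphisms

open Representation

variable {G : Type*} [Group G] {V : Type*} [AddCommGroup V] [Module ℂ V]
  {ρ : Representation ℂ G V} [IsIrreducible ρ] {X : Submodule ℂ V}

lemma IsBlock.linHom_projection_apply (hX : IsBlock ρ X) (g : G) {v : V} (hv : v ∈ X) :
    linHom ρ ρ g (X.projection _ hX.isCompl) v = if g ∈ stabilizer ρ X then v else 0 := by
  rw [linHom_apply, LinearMap.comp_apply, LinearMap.comp_apply]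
  split_ifs with hg
  · rw [Submodule.projection_apply_of_mem_left _ (apply_mem_of_mem_stabilizer (inv_mem hg) hv),
      ρ.self_inv_apply]
  · have hmem : ρ g⁻¹ v ∈ otherTranslates ρ X X :=
      translate_le_otherTranslates (fun h => hg (inv_mem_iff.1 h))
        (apply_mem_translate hv)
    rw [(Submodule.projection_apply_eq_zero_iff _).2 hmem, map_zero]

lemma IsBlock.hasWeight_linHom {L : Subgroup G} [Finite L] (hX : IsBlock ρ X)
    {lam : L →* ℂˣ} (hlam : (stabilizer ρ X).subgroupOf L ≤ lam.ker) :
    HasWeight (linHom ρ ρ) lam := by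
  have := Fintype.ofFinite L
  obtain ⟨v, hv, hv0⟩ := Submodule.exists_mem_ne_zero_of_ne_bot hX.1
  let T := weightProjection (linHom ρ ρ) lam (X.projection _ hX.isCompl)
  have hT : T v = (Finset.univ.filter fun l : L => (l : G) ∈ stabilizer ρ X).card • v := by
    simp only [T, weightProjection, LinearMap.sum_apply, LinearMap.smul_apply,
      hX.linHom_projection_apply _ hv, ← Finset.sum_const, Finset.sum_filter]
    refine Finset.sum_congr rfl fun l _ => ?_
    split_ifs with hl
    · rw [MonoidHom.mem_ker.1 (hlam (Subgroup.mem_subgroupOf.2 hl)), inv_one, Units.val_one,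
        one_smul]
    · rw [smul_zero]
  refine (Submodule.ne_bot_iff _).2 ⟨T, weightProjection_mem_weightSpace _, fun hzero => ?_⟩
  rw [hzero, LinearMap.zero_apply, eq_comm, ← Nat.cast_smul_eq_nsmul ℂ, smul_eq_zero,
    Nat.cast_eq_zero, Finset.card_eq_zero] at hT
  refine Finset.ne_empty_of_mem (a := (1 : L)) ?_ (hT.resolve_right hv0)
  exact Finset.mem_filter.2 ⟨Finset.mem_univ _, one_mem _⟩

end WeightsOfEndomorphisms

section ConstituentCount

open Representation

variable {G : Type} [Group G] [Fintype G]

/-- The nonprincipal irreducible constituents of `χ * conj χ` whose kernel contains `K`. -/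
def etaConstituentsTrivialOn (χ : G → ℂ) (K : Subgroup G) : Set (G → ℂ) :=
  {α ∈ etaConstituents χ | (K : Set G) ⊆ charKer G α}

lemma finite_etaConstituentsTrivialOn (χ : G → ℂ) (K : Subgroup G) :
    (etaConstituentsTrivialOn χ K).Finite :=
  (finite_etaConstituents χ).subset fun _ hα => hα.1

lemma ncard_etaConstituentsTrivialOn_le (χ : G → ℂ) (K : Subgroup G) :
    (etaConstituentsTrivialOn χ K).ncard ≤ (etaConstituents χ).ncard :=
  Set.ncard_le_ncard (fun _ hα => hα.1) (finite_etaConstituents χ)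

lemma etaConstituentsTrivialOn_antitone (χ : G → ℂ) : Antitone (etaConstituentsTrivialOn χ) :=
  fun _ _ hKL _ hα => ⟨hα.1, Set.Subset.trans hKL hα.2⟩

variable {V : Type} [AddCommGroup V] [Module ℂ V] [FiniteDimensional ℂ V]
  {ρ : Representation ℂ G V} {K L N : Subgroup G}

lemma exists_mem_etaConstituentsTrivialOn_diff [K.Normal] (hKL : K ≤ L) {lam : L →* ℂˣ}
    (hne : lam ≠ 1) (hK : K.subgroupOf L ≤ lam.ker) (hlam : HasWeight (linHom ρ ρ) lam) :
    ∃ α ∈ etaConstituentsTrivialOn ρ.character K \ etaConstituentsTrivialOn ρ.character L,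
      CharHasWeight α lam := by
  obtain ⟨α, hα, hweight⟩ := exists_mem_etaConstituents_of_hasWeight hne hlam
  exact ⟨α, ⟨⟨hα, hweight.subset_charKer hKL hK⟩,
    fun hL => hweight.not_subset_charKer hne hL.2⟩, hweight⟩

lemma IsChiefFactor.exists_commutator_derivedSeriesOf_le [Group.IsSolvable G] [L.Normal] [N.Normal]
    (h : IsChiefFactor K L) {W : Submodule ℤ (LinearDual L)} (hW : W ≠ ⊥)
    (hWN : N ≤ stabilizer (dualRep L) W) (hWK : ∀ lam ∈ W, K.subgroupOf L ≤ lam.toMul.ker)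
    (hweight : ∀ lam ∈ W, HasWeight (linHom ρ ρ) lam.toMul) :
    ∃ r ≥ 1, (etaConstituentsTrivialOn ρ.character L).ncard + r ≤
        (etaConstituentsTrivialOn ρ.character K).ncard ∧
      ⁅derivedSeriesOf N (10 * r + orbitConstant), L⁆ ≤ K := by
  have := h.normal_bot
  let S := etaConstituentsTrivialOn ρ.character K \ etaConstituentsTrivialOn ρ.character L
  have hfin : S.Finite := (finite_etaConstituentsTrivialOn _ K).subset Set.sdiff_subset
  have exists_mem (lam : LinearDual L) (hlam : lam ∈ W) (hne : lam ≠ 0) :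
      ∃ α ∈ S, CharHasWeight α lam.toMul :=
    exists_mem_etaConstituentsTrivialOn_diff h.lt.le hne (hWK lam hlam) (hweight lam hlam)
  refine ⟨S.ncard, ?_, ?_, ?_⟩
  · obtain ⟨lam, hlam, hne⟩ := Submodule.exists_mem_ne_zero_of_ne_bot hW
    obtain ⟨α, hα, -⟩ := exists_mem lam hlam hne
    exact (Set.ncard_pos hfin).2 ⟨α, hα⟩
  · rw [add_comm, Set.ncard_sdiff_add_ncard_of_subset
      (etaConstituentsTrivialOn_antitone _ h.lt.le) (finite_etaConstituentsTrivialOn _ K)]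
  · rw [Set.ncard_eq_toFinset_card S hfin]
    refine h.commutator_derivedSeriesOf_le_of_charHasWeight hW hWN hWK fun lam hlam hne => ?_
    simpa only [Set.Finite.mem_toFinset] using exists_mem lam hlam hne

end ConstituentCount

section ImprimitivePart

open Representation

variable {G : Type} [Group G] [Fintype G] [Group.IsSolvable G]
  {V : Type} [AddCommGroup V] [Module ℂ V] [FiniteDimensional ℂ V]
  {ρ : Representation ℂ G V} [IsIrreducible ρ] {X : Submodule ℂ V}

lemma IsBlock.exists_derivedSeriesOf_normalCore_le (hX : IsBlock ρ X) {H U : Subgroup G}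
    (hXH : stabilizer ρ X ≤ H) (hHU : H ⋖ U) (hcore : ¬ U.normalCore ≤ H) :
    ∃ r ≥ 1, (etaConstituentsTrivialOn ρ.character U.normalCore).ncard + r ≤
        (etaConstituentsTrivialOn ρ.character H.normalCore).ncard ∧
      derivedSeriesOf U.normalCore (10 * r + orbitConstant + 1) ≤ H.normalCore := by
  obtain ⟨L, hLU, hL, hsup⟩ := exists_isChiefFactor_sup_eq_of_covBy hHU hcore
  have := hL.normal_top
  have hLL := hL.commutator_le.trans H.normalCore_le
  have hannihilator : annihilator L H ≠ ⊥ :=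
    annihilator_ne_bot hLL fun hLH => hL.lt.not_ge (Subgroup.normal_le_normalCore.2 hLH)
  have hstabilizer : U.normalCore ≤ stabilizer (dualRep L) (annihilator L H) :=
    (U.normalCore_le.trans hsup.ge).trans
      ((sup_le_normalizer_inf hLL).trans normalizer_inf_le_stabilizer_annihilator)
  obtain ⟨r, hr, hcard, hcomm⟩ := hL.exists_commutator_derivedSeriesOf_le (ρ := ρ) hannihilator
    hstabilizer
    (fun lam hlam => (Subgroup.subgroupOf_mono L H.normalCore_le).trans (mem_annihilator.1 hlam))
    fun lam hlam => hX.hasWeight_linHom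
      ((Subgroup.subgroupOf_mono L hXH).trans (mem_annihilator.1 hlam))
  refine ⟨r, hr, le_trans ?_ hcard, ?_⟩
  · exact Nat.add_le_add_right (Set.ncard_le_ncard (etaConstituentsTrivialOn_antitone _ hLU)
      (finite_etaConstituentsTrivialOn _ L)) r
  · refine commutator_le_normalCore (L := L) ?_ hL.commutator_le (hcomm.trans H.normalCore_le)
    exact ((derivedSeriesOf_le _ _).trans U.normalCore_le).trans hsup.ge

lemma IsBlock.derivedSeriesOf_top_le_normalCore (hX : IsBlock ρ X) {H : Subgroup G}
    (hXH : stabilizer ρ X ≤ H) :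
    derivedSeriesOf ⊤ ((11 + orbitConstant) *
      (etaConstituentsTrivialOn ρ.character H.normalCore).ncard) ≤ H.normalCore := by
  induction H using (wellFounded_gt (α := Subgroup G)).induction with
  | _ H ih =>
  rcases eq_or_ne H ⊤ with rfl | hH
  · exact le_top.trans (Subgroup.normal_le_normalCore.2 le_rfl)
  obtain ⟨U, hHU, -⟩ := exists_covBy_le_of_lt (lt_top_iff_ne_top.2 hH)
  have ihU := ih U hHU.lt (hXH.trans hHU.le)
  by_cases hcore : U.normalCore ≤ H
  · rwa [(Subgroup.normalCore_mono hHU.le).antisymm (Subgroup.normal_le_normalCore.2 hcore)]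
  obtain ⟨r, hr, hcard, hstep⟩ := hX.exists_derivedSeriesOf_normalCore_le hXH hHU hcore
  set m := (etaConstituentsTrivialOn ρ.character H.normalCore).ncard
  set n := (etaConstituentsTrivialOn ρ.character U.normalCore).ncard
  have hlength : (11 + orbitConstant) * n + (10 * r + orbitConstant + 1) ≤
      (11 + orbitConstant) * m := by
    nlinarith [Nat.mul_le_mul_left (11 + orbitConstant) hcard, Nat.mul_le_mul_left orbitConstant hr]
  calc derivedSeriesOf ⊤ ((11 + orbitConstant) * m)
      ≤ derivedSeriesOf ⊤ ((11 + orbitConstant) * n + (10 * r + orbitConstant + 1)) :=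
        derivedSeriesOf_antitone _ hlength
    _ = derivedSeriesOf (derivedSeriesOf ⊤ ((11 + orbitConstant) * n))
          (10 * r + orbitConstant + 1) := derivedSeriesOf_add _ _ _
    _ ≤ derivedSeriesOf U.normalCore (10 * r + orbitConstant + 1) := derivedSeriesOf_mono ihU _
    _ ≤ H.normalCore := hstep

end ImprimitivePart

section CommutatorPairing

open scoped commutatorElement

variable {G : Type*} [Group G] {L Z : Subgroup G} [Z.Normal] {mu : LinearDual Z}

/-- The homomorphism sending `m` to the linear character `l ↦ mu ⁅l, m⁆`. -/
def commutatorPairing (hLL : ⁅L, L⁆ ≤ Z) (hmu : ∀ l ∈ L, dualRep Z l mu = mu) :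
    L →* (L →* ℂˣ) :=
  MonoidHom.mk'
    (fun m => MonoidHom.mk'
      (fun l => mu.toMul ⟨⁅(l : G), (m : G)⁆, hLL (Subgroup.commutator_mem_commutator l.2 m.2)⟩)
      fun l l' => by
        rw [mul_comm, ← toMul_conjNormal_of_dualRep_eq (hmu l l.2) ⟨⁅(l' : G), (m : G)⁆, _⟩,
          ← map_mul]
        exact congrArg _ (Subtype.ext (commutatorElement_mul_left_eq_conj_mul _ _ _)))
    fun m m' => MonoidHom.ext fun l => by
      simp only [MonoidHom.mk'_apply, MonoidHom.mul_apply]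
      conv_rhs => rw [← toMul_conjNormal_of_dualRep_eq (hmu m m.2) ⟨⁅(l : G), (m' : G)⁆, _⟩]
      rw [← map_mul]
      refine congrArg _ (Subtype.ext ((commutatorElement_mul_right_eq_mul_conj _ _ _).trans ?_))
      simp only [Subgroup.coe_mul, MulAut.conjNormal_apply, mul_assoc]

variable {hLL : ⁅L, L⁆ ≤ Z} {hmu : ∀ l ∈ L, dualRep Z l mu = mu}

lemma commutatorPairing_apply (m l : L) : commutatorPairing hLL hmu m l =
    mu.toMul ⟨⁅(l : G), (m : G)⁆, hLL (Subgroup.commutator_mem_commutator l.2 m.2)⟩ :=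
  rfl

lemma subgroupOf_le_ker_commutatorPairing (m : L) :
    Z.subgroupOf L ≤ (commutatorPairing hLL hmu m).ker := by
  intro z hz
  have hz : (z : G) ∈ Z := hz
  rw [MonoidHom.mem_ker, commutatorPairing_apply]
  have hmul : (⟨⁅(z : G), (m : G)⁆, hLL (Subgroup.commutator_mem_commutator z.2 m.2)⟩ : Z) =
      ⟨z, hz⟩ * MulAut.conjNormal (m : G) ⟨z, hz⟩⁻¹ := by
    refine Subtype.ext ?_
    simp only [commutatorElement_def, Subgroup.coe_mul, MulAut.conjNormal_apply,
      InvMemClass.coe_inv, mul_assoc]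
  rw [hmul, map_mul, toMul_conjNormal_of_dualRep_eq (hmu m m.2), map_inv, mul_inv_cancel]

lemma dualRep_commutatorPairing [L.Normal] {g : G} (hg : dualRep Z g mu = mu) (m : L) :
    dualRep L g (Additive.ofMul (commutatorPairing hLL hmu m)) =
      Additive.ofMul (commutatorPairing hLL hmu (MulAut.conjNormal g m)) := by
  refine MonoidHom.ext fun l => ?_
  change commutatorPairing hLL hmu m (MulAut.conjNormal g⁻¹ l) =
    commutatorPairing hLL hmu (MulAut.conjNormal g m) l
  rw [commutatorPairing_apply, ← toMul_conjNormal_of_dualRep_eq hg, commutatorPairing_apply]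
  refine congrArg _ (Subtype.ext ?_)
  simp only [MulAut.conjNormal_apply, commutatorElement_def]
  group

/-- The linear characters `l ↦ mu ⁅l, m⁆` of `L`, for `m` in `L`. -/
noncomputable def commutatorCharacters (hLL : ⁅L, L⁆ ≤ Z) (hmu : ∀ l ∈ L, dualRep Z l mu = mu) :
    Submodule ℤ (LinearDual L) :=
  AddSubgroup.toIntSubmodule (MonoidHom.toAdditive (commutatorPairing hLL hmu)).range

lemma mem_commutatorCharacters {lam : LinearDual L} : lam ∈ commutatorCharacters hLL hmu ↔
    ∃ m, Additive.ofMul (commutatorPairing hLL hmu m) = lam :=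
  Iff.rfl

lemma subgroupOf_le_ker_of_mem_commutatorCharacters {lam : LinearDual L}
    (hlam : lam ∈ commutatorCharacters hLL hmu) : Z.subgroupOf L ≤ lam.toMul.ker := by
  obtain ⟨m, rfl⟩ := mem_commutatorCharacters.1 hlam
  exact subgroupOf_le_ker_commutatorPairing (hLL := hLL) (hmu := hmu) m

lemma le_stabilizer_commutatorCharacters [L.Normal] {N : Subgroup G}
    (hN : ∀ x ∈ N, dualRep Z x mu = mu) :
    N ≤ stabilizer (dualRep L) (commutatorCharacters hLL hmu) := by
  refine le_stabilizer_of_forall_translate_le fun x hx => ?_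
  rintro _ ⟨_, ⟨m, rfl⟩, rfl⟩
  exact mem_commutatorCharacters.2 ⟨_, (dualRep_commutatorPairing (hN x hx) m.toMul).symm⟩

lemma commutator_subgroupOf_le_ker_of_commutatorCharacters_eq_bot
    (h : commutatorCharacters hLL hmu = ⊥) : ⁅L, L⁆.subgroupOf Z ≤ mu.toMul.ker := by
  rw [← Subgroup.map_subtype_le_map_subtype, Subgroup.subgroupOf_map_subtype]
  refine inf_le_left.trans (Subgroup.commutator_le.2 fun l hl m hm =>
    ⟨⟨⁅l, m⁆, hLL (Subgroup.commutator_mem_commutator hl hm)⟩, ?_, rfl⟩)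
  have hzero : Additive.ofMul (commutatorPairing hLL hmu ⟨m, hm⟩) = 0 := by
    rw [← Submodule.mem_bot ℤ, ← h]
    exact mem_commutatorCharacters.2 ⟨_, rfl⟩
  exact DFunLike.congr_fun (congrArg Additive.toMul hzero) ⟨l, hl⟩

end CommutatorPairing

section WeightsOnBlocks

open Representation
open scoped commutatorElement

variable {G : Type*} [Group G] {V : Type*} [AddCommGroup V] [Module ℂ V]
  {ρ : Representation ℂ G V} {X : Submodule ℂ V} {D L N Z : Subgroup G}

lemma exists_le_weightSpace_of_minimal_isBlock [Finite G] [FiniteDimensional ℂ V] [N.Normal]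
    (hX : Minimal (IsBlock ρ) X) (hNX : N ≤ stabilizer ρ X) (hNN : ⁅N, N⁆ ≤ MonoidHom.ker ρ) :
    ∃ lam : N →* ℂˣ, X ≤ weightSpace ρ lam := by
  have : Nontrivial X := Submodule.nontrivial_iff_ne_bot.2 hX.1.1
  set H := stabilizer ρ X
  have hker : ⁅N.subgroupOf H, N.subgroupOf H⁆ ≤ MonoidHom.ker (stabilizerRep ρ X) := by
    refine Subgroup.commutator_le.2 fun a ha b hb => LinearMap.ext fun v => Subtype.ext ?_
    exact LinearMap.congr_fun (hNN (Subgroup.commutator_mem_commutator ha hb)) (v : V)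
  obtain ⟨lam, hlam⟩ := exists_hasWeight_of_commutator_le_ker hker
  have htop := isPrimitive_stabilizerRep hX _ hlam.isBlock_weightSpace
  refine ⟨lam.comp (Subgroup.subgroupOfEquivOfLe hNX).symm.toMonoidHom, fun v hv => ?_⟩
  have hmem : (⟨v, hv⟩ : X) ∈ weightSpace (stabilizerRep ρ X) lam := htop ▸ Submodule.mem_top
  exact mem_weightSpace.2 fun n => congrArg Subtype.val
    (mem_weightSpace.1 hmem ((Subgroup.subgroupOfEquivOfLe hNX).symm n))

lemma commutator_le_ker_of_le_weightSpace [IsIrreducible ρ] [D.Normal] [N.Normal] {lam : N →* ℂˣ}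
    (hX : X ≠ ⊥) (hlam : X ≤ weightSpace ρ lam) (hD : D ≤ stabilizer ρ X) :
    ⁅D, N⁆ ≤ MonoidHom.ker ρ := by
  have hweight : HasWeight ρ lam := ne_bot_of_le_ne_bot hX hlam
  exact hweight.le_ker (Subgroup.commutator_le_right D N)
    (commutator_subgroupOf_le_ker_of_dualRep_eq fun _ hx =>
      dualRep_eq_of_le_weightSpace hX hlam (hD hx))

lemma IsBlock.projection_apply_of_mem_stabilizer [IsIrreducible ρ] (hX : IsBlock ρ X) {g : G}
    (hg : g ∈ stabilizer ρ X) (v : V) :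
    X.projection _ hX.isCompl (ρ g v) = ρ g (X.projection _ hX.isCompl v) := by
  have hcomm : Commute (X.projection _ hX.isCompl) (ρ g) := by
    rw [LinearMap.IsIdempotentElem.commute_iff (Submodule.isIdempotentElem_projection _),
      Submodule.range_projection, Submodule.ker_projection]
    refine ⟨fun v hv => apply_mem_of_mem_stabilizer hg hv,
      fun v hv => apply_mem_of_mem_stabilizer (EtaBound.mem_stabilizer.2 ?_) hv⟩
    rw [translate_otherTranslates, EtaBound.mem_stabilizer.1 hg]
  exact LinearMap.congr_fun hcomm v

lemma IsBlock.hasWeight_linHom_of_mem_commutatorCharacters [IsIrreducible ρ] [Z.Normal]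
    (hX : IsBlock ρ X) {mu : LinearDual Z} (hXmu : X ≤ weightSpace ρ mu.toMul)
    (hLX : L ≤ stabilizer ρ X) {hLL : ⁅L, L⁆ ≤ Z} {hmu : ∀ l ∈ L, dualRep Z l mu = mu}
    {lam : LinearDual L} (hlam : lam ∈ commutatorCharacters hLL hmu) :
    HasWeight (linHom ρ ρ) lam.toMul := by
  obtain ⟨m, rfl⟩ := mem_commutatorCharacters.1 hlam
  let P := X.projection _ hX.isCompl
  have hP (v : V) : P v ∈ X := Submodule.projection_apply_mem _ v
  refine (Submodule.ne_bot_iff _).2 ⟨ρ m ∘ₗ P, mem_weightSpace.2 fun l => ?_, fun hzero => ?_⟩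
  · refine LinearMap.ext fun v => ?_
    have hmem : ρ m (P v) ∈ weightSpace ρ mu.toMul :=
      hXmu (apply_mem_of_mem_stabilizer (hLX m.2) (hP v))
    have hmul : (l : G) * m * (l : G)⁻¹ = ⁅(l : G), (m : G)⁆ * m := by
      rw [commutatorElement_def, inv_mul_cancel_right]
    calc ρ l (ρ m (P (ρ (l : G)⁻¹ v)))
        = ρ (l * m * (l : G)⁻¹) (P v) := by
          rw [hX.projection_apply_of_mem_stabilizer (inv_mem (hLX l.2)), map_mul, map_mul,
            Module.End.mul_apply, Module.End.mul_apply]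
      _ = ρ ⁅(l : G), (m : G)⁆ (ρ m (P v)) := by rw [hmul, map_mul, Module.End.mul_apply]
      _ = (commutatorPairing hLL hmu m l : ℂ) • ρ m (P v) := mem_weightSpace.1 hmem
          ⟨⁅(l : G), (m : G)⁆, hLL (Subgroup.commutator_mem_commutator l.2 m.2)⟩
  · obtain ⟨v, hv, hv0⟩ := Submodule.exists_mem_ne_zero_of_ne_bot hX.1
    have hvzero : ρ m (P v) = 0 := LinearMap.congr_fun hzero v
    rw [Submodule.projection_apply_of_mem_left _ hv] at hvzero
    exact hv0 ((ρ.apply_bijective m).injective (hvzero.trans (map_zero _).symm))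

end WeightsOnBlocks

section PrimitivePart

open Representation

section

variable {G : Type*} [Group G] [Finite G] {V : Type*} [AddCommGroup V] [Module ℂ V]
  [FiniteDimensional ℂ V] {ρ : Representation ℂ G V} {X : Submodule ℂ V} {C L : Subgroup G}
  [C.Normal]

lemma le_centerModulo_ker_of_commutator_le_ker [IsIrreducible ρ] (hX : Minimal (IsBlock ρ) X)
    (hCX : C ≤ stabilizer ρ X) [L.Normal] (hLC : L ≤ C) (hLL : ⁅L, L⁆ ≤ MonoidHom.ker ρ) :
    L ≤ centerModulo (MonoidHom.ker ρ) C := by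
  obtain ⟨lam, hlam⟩ := exists_le_weightSpace_of_minimal_isBlock hX (hLC.trans hCX) hLL
  refine le_centerModulo.2 ⟨hLC, ?_⟩
  rw [Subgroup.commutator_comm]
  exact commutator_le_ker_of_le_weightSpace hX.1.1 hlam hCX

lemma exists_le_weightSpace_centerModulo_ker (hX : Minimal (IsBlock ρ) X)
    (hCX : C ≤ stabilizer ρ X) :
    ∃ mu : LinearDual (centerModulo (MonoidHom.ker ρ) C), X ≤ weightSpace ρ mu.toMul := by
  obtain ⟨hZC, hcomm⟩ := le_centerModulo.1 (le_refl (centerModulo (MonoidHom.ker ρ) C))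
  exact exists_le_weightSpace_of_minimal_isBlock hX (hZC.trans hCX)
    ((Subgroup.commutator_mono le_rfl hZC).trans hcomm)

end

variable {G : Type} [Group G] [Fintype G] [Group.IsSolvable G]
  {V : Type} [AddCommGroup V] [Module ℂ V] [FiniteDimensional ℂ V]
  {ρ : Representation ℂ G V} [IsIrreducible ρ] {X : Submodule ℂ V} {C L : Subgroup G} [C.Normal]

lemma IsChiefFactor.commutator_derivedSeriesOf_le_centerModulo_ker
    (hL : IsChiefFactor (centerModulo (MonoidHom.ker ρ) C) L) (hX : Minimal (IsBlock ρ) X)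
    (hCX : C ≤ stabilizer ρ X) (hLC : L ≤ C) :
    ⁅derivedSeriesOf C (10 * (etaConstituents ρ.character).ncard + orbitConstant), L⁆ ≤
      centerModulo (MonoidHom.ker ρ) C := by
  have := hL.normal_top
  obtain ⟨mu, hXmu⟩ := exists_le_weightSpace_centerModulo_ker hX hCX
  have hmu (x : G) (hx : x ∈ C) : dualRep _ x mu = mu :=
    dualRep_eq_of_le_weightSpace hX.1.1 hXmu (hCX hx)
  have hLL := hL.commutator_le
  have hW : commutatorCharacters hLL (fun l hl => hmu l (hLC hl)) ≠ ⊥ := fun hbot => by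
    have hweight : HasWeight ρ mu.toMul := ne_bot_of_le_ne_bot hX.1.1 hXmu
    exact hL.lt.not_ge (le_centerModulo_ker_of_commutator_le_ker hX hCX hLC (hweight.le_ker hLL
      (commutator_subgroupOf_le_ker_of_commutatorCharacters_eq_bot hbot)))
  obtain ⟨r, -, hcard, hcomm⟩ := hL.exists_commutator_derivedSeriesOf_le (ρ := ρ) hW
    (le_stabilizer_commutatorCharacters hmu)
    (fun lam hlam => subgroupOf_le_ker_of_mem_commutatorCharacters hlam)
    fun lam hlam => hX.1.hasWeight_linHom_of_mem_commutatorCharacters hXmu (hLC.trans hCX) hlam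
  have hr := (Nat.le_add_left _ _).trans (hcard.trans (ncard_etaConstituentsTrivialOn_le _ _))
  exact (Subgroup.commutator_mono (derivedSeriesOf_antitone _ (by lia)) le_rfl).trans hcomm

lemma derivedSeriesOf_succ_le_centerModulo_ker (hX : Minimal (IsBlock ρ) X)
    (hCX : C ≤ stabilizer ρ X) :
    derivedSeriesOf C (10 * (etaConstituents ρ.character).ncard + orbitConstant + 1) ≤
      centerModulo (MonoidHom.ker ρ) C := by
  set Z := centerModulo (MonoidHom.ker ρ) C
  set D := derivedSeriesOf C (10 * (etaConstituents ρ.character).ncard + orbitConstant) with hD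
  obtain ⟨hZC, hZcomm⟩ := le_centerModulo.1 (le_refl Z)
  have hDC : D ≤ C := derivedSeriesOf_le _ _
  rw [derivedSeriesOf_succ, ← hD]
  by_contra hDZ
  obtain ⟨L, hLDZ, hL⟩ := exists_isChiefFactor (K := Z) (N := ⁅D, D⁆ ⊔ Z) (right_lt_sup.2 hDZ)
  have := hL.normal_top
  have hLC : L ≤ C := hLDZ.trans (sup_le ((Subgroup.commutator_le_self D).trans hDC) hZC)
  have hDL : ⁅D, L⁆ ≤ Z := hL.commutator_derivedSeriesOf_le_centerModulo_ker hX hCX hLC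
  have hDDL : ⁅⁅D, D⁆, L⁆ ≤ MonoidHom.ker ρ :=
    commutator_commutator_le_of_rotate ((Subgroup.commutator_mono hDL hDC).trans hZcomm)
  have hZL : ⁅Z, L⁆ ≤ MonoidHom.ker ρ := (Subgroup.commutator_mono le_rfl hLC).trans hZcomm
  have hLL : ⁅L, L⁆ ≤ MonoidHom.ker ρ :=
    (Subgroup.commutator_mono hLDZ le_rfl).trans (commutator_sup_le hDDL hZL)
  exact hL.lt.not_ge (le_centerModulo_ker_of_commutator_le_ker hX hCX hLC hLL)

lemma derivedSeriesOf_le_ker_of_le_stabilizer (hX : Minimal (IsBlock ρ) X)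
    (hCX : C ≤ stabilizer ρ X) :
    derivedSeriesOf C (10 * (etaConstituents ρ.character).ncard + orbitConstant + 2) ≤
      MonoidHom.ker ρ := by
  have hle := derivedSeriesOf_succ_le_centerModulo_ker hX hCX
  obtain ⟨-, hcomm⟩ := le_centerModulo.1 hle
  rw [derivedSeriesOf_succ]
  exact (Subgroup.commutator_mono le_rfl (derivedSeriesOf_le _ _)).trans hcomm

end PrimitivePart

section Bound

open Representation

variable {G : Type} [Group G] [Fintype G] [Group.IsSolvable G]

lemma derivedSeriesOf_top_le_ker {V : Type} [AddCommGroup V] [Module ℂ V] [FiniteDimensional ℂ V]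
    (ρ : Representation ℂ G V) [IsIrreducible ρ] :
    derivedSeriesOf ⊤ ((21 + orbitConstant) * (etaConstituents ρ.character).ncard +
      (orbitConstant + 2)) ≤ MonoidHom.ker ρ := by
  have : Nontrivial V := nontrivial_of_isSimpleOrder (ρ := ρ)
  obtain ⟨X, hX⟩ := exists_minimal_isBlock ρ
  set C := (stabilizer ρ X).normalCore
  set n := (etaConstituents ρ.character).ncard
  have hcard := ncard_etaConstituentsTrivialOn_le ρ.character C
  have hC : derivedSeriesOf ⊤ ((11 + orbitConstant) * n) ≤ C :=
    (derivedSeriesOf_antitone _ (Nat.mul_le_mul_left _ hcard)).trans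
      (hX.1.derivedSeriesOf_top_le_normalCore le_rfl)
  have hlength : (21 + orbitConstant) * n + (orbitConstant + 2) =
      (11 + orbitConstant) * n + (10 * n + orbitConstant + 2) := by ring
  calc derivedSeriesOf ⊤ ((21 + orbitConstant) * n + (orbitConstant + 2))
      = derivedSeriesOf (derivedSeriesOf ⊤ ((11 + orbitConstant) * n))
          (10 * n + orbitConstant + 2) := by rw [hlength, derivedSeriesOf_add]
    _ ≤ derivedSeriesOf C (10 * n + orbitConstant + 2) := derivedSeriesOf_mono hC _
    _ ≤ MonoidHom.ker ρ :=
        derivedSeriesOf_le_ker_of_le_stabilizer hX (stabilizer ρ X).normalCore_le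

lemma derivedLength_quotient_le_of_isIrrChar {χ : G → ℂ} (hχ : IsIrrChar G χ) {K : Subgroup G}
    [K.Normal] (hK : charKer G χ ⊆ K) :
    derivedLength (G ⧸ K) ≤ (21 + orbitConstant) * etaChar G χ + (orbitConstant + 2) := by
  obtain ⟨V, hV, rfl⟩ := hχ
  have : IsIrreducible (V.ρ : Representation ℂ G V) := (simple_iff_isIrreducible V).1 hV
  refine derivedLength_quotient_le ((derivedSeriesOf_top_le_ker V.ρ).trans ?_)
  exact (le_ker_iff_subset_charKer.1 le_rfl).trans hK

end Bound

end EtaBound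

/-- Theorem A: there are universal constants `C`, `D` such that for every finite
solvable group `G` and every `χ ∈ Irr(G)`, `dl(G/Ker χ) ≤ C·η(χ) + D`. -/
theorem derivedLength_le_linear_eta :
    ∃ C D : ℝ, ∀ (G : Type) [Group G] [Fintype G], IsSolvable G →
      ∀ χ : G → ℂ, IsIrrChar G χ →
      ∀ (K : Subgroup G) [K.Normal], (K : Set G) = charKer G χ →
      (derivedLength (G ⧸ K) : ℝ) ≤ C * (etaChar G χ : ℝ) + D := by
  refine ⟨(21 + EtaBound.orbitConstant : ℕ), (EtaBound.orbitConstant + 2 : ℕ), ?_⟩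
  intro G _ _ hsolvable χ hχ K _ hK
  have : Group.IsSolvable G := hsolvable
  exact_mod_cast EtaBound.derivedLength_quotient_le_of_isIrrChar hχ hK.ge
end

section
/- Let G be a finite solvable group, χ ∈ Irr(G) faithful, and let α_1, …, α_n be the distinct non-principal irreducible constituents of χ·conj(χ). If L is a normal subgroup of G not contained in Ker(α_i) for any i, and N is a normal subgroup of G contained in L with N ≤ Ker(α_j) for some j, then χ_L is irreducible while χ_N is reducible. -/
open scoped Classical BigOperators

/-!
Let `ρ` afford `χ` on `V`. The representation of `G` on `End V` affords `χ ⬝ conj χ`, and for any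
subgroup `H` the character `χ_H` is irreducible iff `(End V)^H` has dimension one; as `(End V)^G`
already has dimension one, this says that `(End V)^H = (End V)^G`. If `L` is normal then
`(End V)^L` is `G`-stable, hence a sum of irreducible subrepresentations, whose characters are
constituents of `χ ⬝ conj χ` with `L` in their kernel; when all of these are principal,
`(End V)^L = (End V)^G`. Conversely, a constituent with `N` in its kernel maps nontrivially into
`(End V)^N`, and if this space is `(End V)^G` then the constituent has a trivial quotient, so it is
principal.
-/

open Representation Module

section ConjCharacter

open scoped Matrix ComplexOrder

variable {𝕜 : Type*} [RCLike 𝕜] {G : Type*} [Group G] [Finite G]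

lemma exists_posDef_conjTranspose_mul_mul_eq_self {n : Type*} [Fintype n] [DecidableEq n]
    (M : G →* Matrix n n 𝕜) :
    ∃ P : Matrix n n 𝕜, P.PosDef ∧ ∀ g, (M g)ᴴ * P * M g = P := by
  have := Fintype.ofFinite G
  refine ⟨∑ x, (M x)ᴴ * M x, ?_, fun g ↦ ?_⟩
  · rw [← Finset.add_sum_erase _ (fun x ↦ (M x)ᴴ * M x) (Finset.mem_univ 1)]
    refine Matrix.PosDef.add_posSemidef ?_
      (Matrix.posSemidef_sum _ fun x _ ↦ Matrix.posSemidef_conjTranspose_mul_self _)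
    simpa using Matrix.PosDef.one
  · rw [Finset.mul_sum, Finset.sum_mul]
    refine Fintype.sum_equiv (Equiv.mulRight g) _ _ fun x ↦ ?_
    simp only [Equiv.coe_mulRight, map_mul, Matrix.conjTranspose_mul, Matrix.mul_assoc]

lemma star_trace_eq_trace_inv {n : Type*} [Fintype n] [DecidableEq n]
    (M : G →* Matrix n n 𝕜) (g : G) : star (M g).trace = (M g⁻¹).trace := by
  obtain ⟨P, hP, hinv⟩ := exists_posDef_conjTranspose_mul_mul_eq_self M
  have hdet : IsUnit P.det := (Matrix.isUnit_iff_isUnit_det P).1 hP.isUnit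
  have hintertwine : (M g)ᴴ * P = P * M g⁻¹ := by
    calc (M g)ᴴ * P = (M g)ᴴ * P * (M g * M g⁻¹) := by
          rw [← map_mul, mul_inv_cancel, map_one, mul_one]
      _ = P * M g⁻¹ := by rw [← mul_assoc, hinv]
  calc star (M g).trace = ((M g)ᴴ * P * P⁻¹).trace := by
        rw [Matrix.mul_nonsing_inv_cancel_right _ _ hdet, Matrix.trace_conjTranspose]
    _ = (M g⁻¹).trace := by
        rw [hintertwine, Matrix.trace_mul_comm, Matrix.nonsing_inv_mul_cancel_left _ _ hdet]

variable {V : Type*} [AddCommGroup V] [Module 𝕜 V] [FiniteDimensional 𝕜 V]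

lemma conj_character (ρ : Representation 𝕜 G V) (g : G) :
    (starRingEnd 𝕜) (ρ.character g) = ρ.character g⁻¹ := by
  let b := Module.finBasis 𝕜 V
  have htrace (x : G) : ρ.character x = (LinearMap.toMatrix b b (ρ x)).trace :=
    LinearMap.trace_eq_matrix_trace 𝕜 b (ρ x)
  rw [htrace, htrace]
  let M : G →* Matrix (Fin (finrank 𝕜 V)) (Fin (finrank 𝕜 V)) 𝕜 :=
    (LinearMap.toMatrixAlgEquiv b).toAlgHom.toMonoidHom'.comp ρ
  exact star_trace_eq_trace_inv M g

lemma mul_conj_character_eq_character_linHom (ρ : Representation 𝕜 G V) :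
    (fun g ↦ ρ.character g * (starRingEnd 𝕜) (ρ.character g)) = (linHom ρ ρ).character := by
  ext g
  rw [char_linHom, conj_character, mul_comm]

end ConjCharacter

lemma invariants_le_invariants_comp_subtype {k G V : Type*} [CommRing k] [Group G]
    [AddCommGroup V] [Module k V] (ρ : Representation k G V) (H : Subgroup G) :
    ρ.invariants ≤ invariants (ρ.comp H.subtype) :=
  fun _ hv h ↦ hv h

lemma invariants_eq_top_of_character_eq_finrank {k G V : Type*} [Field k] [CharZero k] [Group G]
    [Finite G] [AddCommGroup V] [Module k V] [FiniteDimensional k V]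
    (ρ : Representation k G V) (h : ∀ g, ρ.character g = finrank k V) : ρ.invariants = ⊤ := by
  have := Fintype.ofFinite G
  have hcard : (Nat.card G : k) ≠ 0 := NeZero.ne _
  have := invertibleOfNonzero hcard
  apply Submodule.eq_top_of_finrank_eq
  have haverage := card_inv_mul_sum_char_eq_finrank ρ
  simp only [h, Finset.sum_const, Finset.card_univ, nsmul_eq_mul, ← Nat.card_eq_fintype_card,
    inv_mul_cancel_left₀ hcard] at haverage
  exact_mod_cast haverage.symm

lemma character_trivial {k G : Type*} [Field k] [Monoid G] :
    (trivial k G k).character = fun _ ↦ 1 := by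
  ext g
  simp [character]

lemma exists_intertwiningMap_trivial_ne_zero {k G V W : Type*} [Field k] [Group G]
    [AddCommGroup V] [Module k V] [AddCommGroup W] [Module k W] {ρ : Representation k G V}
    {σ : Representation k G W} {φ : IntertwiningMap ρ σ} (hφ : φ ≠ 0)
    (hinv : ∀ v, φ v ∈ σ.invariants) :
    ∃ f : IntertwiningMap ρ (trivial k G k), f ≠ 0 := by
  obtain ⟨v, hv⟩ := DFunLike.ne_iff.1 hφ
  obtain ⟨l, hl⟩ := Projective.exists_dual_ne_zero k hv
  refine ⟨⟨l ∘ₗ φ.toLinearMap, fun g ↦ LinearMap.ext fun u ↦ ?_⟩,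
    fun h ↦ hl (DFunLike.congr_fun h v)⟩
  exact congrArg l ((IntertwiningMap.isIntertwining ρ σ φ g u).trans (hinv u g))

section IrreducibleSubrepresentations

variable {k G V : Type*} [Field k] [Monoid G] [AddCommGroup V] [Module k V]
  {σ : Representation k G V}

/-- The inclusion of a subrepresentation, as an intertwining map. -/
def subrepresentationSubtype (X : Subrepresentation σ) : IntertwiningMap X.toRepresentation σ :=
  ⟨X.toSubmodule.subtype, fun _ ↦ rfl⟩

lemma subrepresentationSubtype_injective (X : Subrepresentation σ) :
    Function.Injective (subrepresentationSubtype X) :=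
  Subtype.val_injective

lemma subrepresentationSubtype_ne_zero (X : Subrepresentation σ)
    [IsIrreducible X.toRepresentation] : subrepresentationSubtype X ≠ 0 := by
  intro h
  have htop : (⊤ : Subrepresentation X.toRepresentation) ≤ ⊥ := fun x _ ↦
    subrepresentationSubtype_injective X (DFunLike.congr_fun h x)
  exact bot_ne_top (eq_top_iff.2 htop)

lemma isIrreducible_toRepresentation_of_isAtom {X : Subrepresentation σ} (hX : IsAtom X) :
    IsIrreducible X.toRepresentation where
  exists_pair_ne := by
    refine ⟨⊥, ⊤, fun h ↦ hX.1 <| eq_bot_iff.2 fun x hx ↦ ?_⟩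
    have hmem : (⟨x, hx⟩ : X.toSubmodule) ∈ (⊥ : Subrepresentation X.toRepresentation) :=
      h ▸ Submodule.mem_top
    exact congrArg Subtype.val hmem
  eq_bot_or_eq_top Y := by
    let Z := ((subrepresentationSubtype X).comp (subrepresentationSubtype Y)).range
    have hZX : Z ≤ X := by
      rintro _ ⟨y, rfl⟩
      exact y.1.2
    refine (hX.le_iff.1 hZX).imp (fun hZ ↦ ?_) (fun hZ ↦ ?_)
    · refine eq_bot_iff.2 fun y hy ↦ Subtype.ext ?_
      have hmem : (y : V) ∈ Z := ⟨⟨y, hy⟩, rfl⟩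
      rw [hZ] at hmem
      exact hmem
    · refine eq_top_iff.2 fun y _ ↦ ?_
      obtain ⟨y', hy'⟩ : (y : V) ∈ Z := by rw [hZ]; exact y.2
      exact subrepresentationSubtype_injective X hy' ▸ y'.2

lemma le_of_forall_isIrreducible_le [IsSemisimpleRepresentation σ] {U W : Subrepresentation σ}
    (h : ∀ X ≤ U, IsIrreducible X.toRepresentation → X ≤ W) : U ≤ W := by
  let e := Subrepresentation.subrepresentationSubmoduleOrderIso (ρ := σ)
  have := (isSemisimpleRepresentation_iff_isSemisimpleModule_asModule σ).1 inferInstance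
  rw [← e.le_iff_le, le_iff_atom_le_imp]
  intro S hS hSU
  rw [← e.symm_apply_le] at hSU ⊢
  exact h _ hSU (isIrreducible_toRepresentation_of_isAtom ((e.symm.isAtom_iff S).2 hS))

end IrreducibleSubrepresentations

lemma toSubmodule_le_invariants_comp_iff {k G H V : Type*} [CommRing k] [Group G] [Group H]
    [AddCommGroup V] [Module k V] {σ : Representation k G V} (X : Subrepresentation σ)
    (f : H →* G) :
    X.toSubmodule ≤ invariants (σ.comp f) ↔ invariants (X.toRepresentation.comp f) = ⊤ := by
  refine ⟨fun hX ↦ eq_top_iff.2 fun x _ h ↦ Subtype.ext (hX x.2 h), fun htop x hx h ↦ ?_⟩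
  have hxinv : (⟨x, hx⟩ : X.toSubmodule) ∈ invariants (X.toRepresentation.comp f) :=
    htop ▸ Submodule.mem_top
  exact congrArg Subtype.val (hxinv h)

lemma coe_subset_charKer_iff_invariants_comp_subtype_eq_top {G V : Type} [Group G] [Finite G]
    [AddCommGroup V] [Module ℂ V] [FiniteDimensional ℂ V] (ρ : Representation ℂ G V)
    (H : Subgroup G) :
    (H : Set G) ⊆ charKer G ρ.character ↔ invariants (ρ.comp H.subtype) = ⊤ := by
  refine ⟨fun hH ↦ ?_, fun htop g hg ↦ ?_⟩
  · exact invariants_eq_top_of_character_eq_finrank _ fun h ↦ (hH h.2).trans (char_one ρ)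
  · have hact : ρ g = ρ 1 := by
      rw [map_one]
      ext v
      have hv : v ∈ invariants (ρ.comp H.subtype) := htop ▸ Submodule.mem_top
      exact hv ⟨g, hg⟩
    exact congrArg (LinearMap.trace ℂ V) hact

section Characters

variable {G : Type} [Group G] [Fintype G]
  {V W : Type} [AddCommGroup V] [Module ℂ V] [FiniteDimensional ℂ V]
  [AddCommGroup W] [Module ℂ W] [FiniteDimensional ℂ W]

lemma charInner_character_eq_finrank (σ : Representation ℂ G W) (ρ : Representation ℂ G V) :
    charInner G σ.character ρ.character = finrank ℂ (IntertwiningMap ρ σ) := by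
  have := invertibleOfNonzero (NeZero.ne (Nat.card G : ℂ))
  rw [← card_inv_mul_sum_char_mul_char_eq_finrank]
  simp only [charInner, conj_character, Nat.card_eq_fintype_card]

lemma charInner_character_ne_zero_iff (σ : Representation ℂ G W) (ρ : Representation ℂ G V) :
    charInner G σ.character ρ.character ≠ 0 ↔ ∃ φ : IntertwiningMap ρ σ, φ ≠ 0 := by
  have : FiniteDimensional ℂ (IntertwiningMap ρ σ) :=
    Module.Finite.equiv (invariantsEquivIntertwiningMap ρ σ)
  rw [charInner_character_eq_finrank, Nat.cast_ne_zero, ← Nat.pos_iff_ne_zero,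
    finrank_pos_iff_exists_ne_zero]

lemma isIrrChar_character_iff_finrank_invariants (ρ : Representation ℂ G V) :
    IsIrrChar G ρ.character ↔ finrank ℂ (linHom ρ ρ).invariants = 1 := by
  have := invertibleOfNonzero (NeZero.ne (Nat.card G : ℂ))
  have hnorm : finrank ℂ (linHom ρ ρ).invariants = 1 ↔
      ∑ g, ρ.character g * ρ.character g⁻¹ = Nat.card G := by
    rw [(invariantsEquivIntertwiningMap ρ ρ).finrank_eq, ← Nat.cast_inj (R := ℂ),
      ← card_inv_mul_sum_char_mul_char_eq_finrank, Nat.cast_one,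
      inv_mul_eq_one₀ (NeZero.ne (Nat.card G : ℂ)), eq_comm]
  rw [hnorm]
  constructor
  · rintro ⟨U, hU, hchar⟩
    rw [← hchar]
    exact (FDRep.simple_iff_char_is_norm_one U).1 hU
  · intro h
    exact ⟨FDRep.of ρ, (FDRep.simple_iff_char_is_norm_one (FDRep.of ρ)).2 h, rfl⟩

lemma isIrrChar_character_of_isIrreducible (ρ : Representation ℂ G V) [IsIrreducible ρ] :
    IsIrrChar G ρ.character := by
  rw [isIrrChar_character_iff_finrank_invariants, (invariantsEquivIntertwiningMap ρ ρ).finrank_eq,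
    IsIrreducible.finrank_intertwiningMap_self]

lemma isIrrChar_one : IsIrrChar G fun _ ↦ 1 := by
  have hinv : (linHom (trivial ℂ G ℂ) (trivial ℂ G ℂ)).invariants = ⊤ :=
    eq_top_iff.2 fun f _ g ↦ rfl
  rw [← character_trivial (k := ℂ), isIrrChar_character_iff_finrank_invariants, hinv, finrank_top,
    finrank_linearMap_self, finrank_self]

lemma eq_of_isIrrChar_of_charInner_ne_zero {φ ψ : G → ℂ} (hφ : IsIrrChar G φ)
    (hψ : IsIrrChar G ψ) (h : charInner G φ ψ ≠ 0) : φ = ψ := by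
  obtain ⟨A, _, rfl⟩ := hφ
  obtain ⟨B, _, rfl⟩ := hψ
  have := invertibleOfNonzero (NeZero.ne (Nat.card G : ℂ))
  by_contra hne
  have hiso : ¬ Nonempty (A ≅ B) := fun ⟨i⟩ ↦ hne (FDRep.char_iso i)
  have horth : (Nat.card G : ℂ)⁻¹ * ∑ g : G, A.character g * B.character g⁻¹ = 0 := by
    rw [FDRep.char_orthonormal, if_neg hiso]
  refine h ?_
  rw [← horth, charInner, Nat.card_eq_fintype_card]
  exact congrArg _ (Finset.sum_congr rfl fun g _ ↦ congrArg _ (conj_character B.ρ g))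

/-- `β` is an irreducible constituent of the character `φ`: an irreducible character whose inner
product with `φ` is nonzero. -/
structure IsConstituent (φ β : G → ℂ) : Prop where
  isIrrChar : IsIrrChar G β
  charInner_ne_zero : charInner G φ β ≠ 0

lemma isConstituent_character_toRepresentation (σ : Representation ℂ G W)
    (X : Subrepresentation σ) [IsIrreducible X.toRepresentation] :
    IsConstituent σ.character X.toRepresentation.character where
  isIrrChar := isIrrChar_character_of_isIrreducible _
  charInner_ne_zero :=
    (charInner_character_ne_zero_iff σ _).2 ⟨_, subrepresentationSubtype_ne_zero X⟩

lemma invariants_comp_subtype_eq_of_forall_isConstituent (σ : Representation ℂ G W)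
    (L : Subgroup G) [L.Normal]
    (hL : ∀ β, IsConstituent σ.character β → (L : Set G) ⊆ charKer G β → β = fun _ ↦ 1) :
    invariants (σ.comp L.subtype) = σ.invariants := by
  refine le_antisymm ?_ (invariants_le_invariants_comp_subtype σ L)
  let U : Subrepresentation σ := ⟨invariants (σ.comp L.subtype), fun g ↦ le_comap_invariants σ L g⟩
  let U₀ : Subrepresentation σ := ⟨σ.invariants, fun g v hv ↦ (hv g).symm ▸ hv⟩
  suffices U ≤ U₀ from this
  refine le_of_forall_isIrreducible_le fun X hX _ ↦ ?_
  have hker : (L : Set G) ⊆ charKer G X.toRepresentation.character :=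
    (coe_subset_charKer_iff_invariants_comp_subtype_eq_top _ L).2
      ((toSubmodule_le_invariants_comp_iff X L.subtype).1 hX)
  have hone : X.toRepresentation.character = fun _ ↦ 1 :=
    hL _ (isConstituent_character_toRepresentation σ X) hker
  have htop : X.toRepresentation.invariants = ⊤ := by
    refine invariants_eq_top_of_character_eq_finrank _ fun g ↦ ?_
    rw [← char_one X.toRepresentation, hone]
  exact (toSubmodule_le_invariants_comp_iff X (MonoidHom.id G)).2 htop

lemma eq_one_of_isConstituent_of_invariants_comp_subtype_eq (σ : Representation ℂ G W)
    {N : Subgroup G} {β : G → ℂ} (hβ : IsConstituent σ.character β)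
    (hN : (N : Set G) ⊆ charKer G β) (hinv : invariants (σ.comp N.subtype) = σ.invariants) :
    β = fun _ ↦ 1 := by
  obtain ⟨B, _, rfl⟩ := hβ.isIrrChar
  obtain ⟨φ, hφ⟩ := (charInner_character_ne_zero_iff σ B.ρ).1 hβ.charInner_ne_zero
  have hfix (b : B) (n : N) : B.ρ n b = b := by
    have hb : b ∈ invariants (B.ρ.comp N.subtype) :=
      (coe_subset_charKer_iff_invariants_comp_subtype_eq_top B.ρ N).1 hN ▸ Submodule.mem_top
    exact hb n
  have hφinv (b : B) : φ b ∈ σ.invariants := by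
    rw [← hinv]
    intro n
    exact (IntertwiningMap.isIntertwining B.ρ σ φ n b).symm.trans (congrArg φ (hfix b n))
  have hone := (charInner_character_ne_zero_iff (trivial ℂ G ℂ) B.ρ).2
    (exists_intertwiningMap_trivial_ne_zero hφ hφinv)
  rw [character_trivial] at hone
  exact (eq_of_isIrrChar_of_charInner_ne_zero isIrrChar_one hβ.isIrrChar hone).symm

lemma isIrrChar_restrict_iff_invariants_eq (ρ : Representation ℂ G V) (hρ : IsIrrChar G ρ.character)
    (H : Subgroup G) : IsIrrChar H (fun x ↦ ρ.character x) ↔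
      invariants ((linHom ρ ρ).comp H.subtype) = (linHom ρ ρ).invariants := by
  rw [isIrrChar_character_iff_finrank_invariants] at hρ
  have hH : IsIrrChar H (fun x ↦ ρ.character x) ↔
      finrank ℂ (invariants ((linHom ρ ρ).comp H.subtype)) = 1 :=
    isIrrChar_character_iff_finrank_invariants (ρ.comp H.subtype)
  rw [hH, ← hρ]
  refine ⟨fun h ↦ ?_, fun h ↦ by rw [h]⟩
  exact (Submodule.eq_of_le_of_finrank_eq (invariants_le_invariants_comp_subtype _ H) h.symm).symm

end Characters

theorem restriction_irr_and_reducible_general {G : Type} [Group G] [Fintype G] {χ : G → ℂ}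
    (hχ : IsIrrChar G χ) {L N : Subgroup G} [L.Normal]
    (hL : ∀ β, IsConstituent (fun g ↦ χ g * (starRingEnd ℂ) (χ g)) β → β ≠ (fun _ ↦ 1) →
      ¬ (L : Set G) ⊆ charKer G β)
    {β : G → ℂ} (hβ : IsConstituent (fun g ↦ χ g * (starRingEnd ℂ) (χ g)) β)
    (hβ_ne : β ≠ fun _ ↦ 1) (hN : (N : Set G) ⊆ charKer G β) :
    IsIrrChar L (fun x ↦ χ x) ∧ ¬ IsIrrChar N (fun x ↦ χ x) := by
  obtain ⟨V, hV⟩ : ∃ V : FDRep ℂ G, character V.ρ = χ := hχ.imp fun _ h ↦ h.2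
  subst hV
  rw [mul_conj_character_eq_character_linHom] at hL hβ
  rw [isIrrChar_restrict_iff_invariants_eq V.ρ hχ, isIrrChar_restrict_iff_invariants_eq V.ρ hχ]
  refine ⟨invariants_comp_subtype_eq_of_forall_isConstituent _ L fun γ hγ hLγ ↦ ?_, fun hinv ↦ ?_⟩
  · by_contra hγ_ne
    exact hL γ hγ hγ_ne hLγ
  · exact hβ_ne (eq_one_of_isConstituent_of_invariants_comp_subtype_eq _ hβ hN hinv)

/-- If the normal subgroup `L` lies in no kernel of a non-principal irreducible
constituent of `χ ⬝ conj χ` while the normal subgroup `N ≤ L` lies in some such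
kernel, then `χ_L` is irreducible and `χ_N` is reducible. -/
theorem restriction_irr_and_reducible (G : Type) [Group G] [Fintype G]
    (hsolv : IsSolvable G) (χ : G → ℂ) (hχ : IsIrrChar G χ)
    (hfaithful : ∀ g : G, χ g = χ 1 → g = 1)
    (n : ℕ) (α : Fin n → (G → ℂ)) (hinj : Function.Injective α)
    (hirr : ∀ i, IsIrrChar G (α i)) (hnp : ∀ i, α i ≠ fun _ => 1)
    (hconst : ∀ i, charInner G (fun g => χ g * (starRingEnd ℂ) (χ g)) (α i) ≠ 0)
    (hall : ∀ β : G → ℂ, IsIrrChar G β → β ≠ (fun _ => 1) →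
      charInner G (fun g => χ g * (starRingEnd ℂ) (χ g)) β ≠ 0 → ∃ i, β = α i)
    (L : Subgroup G) (hL : L.Normal) (hLker : ∀ i, ¬ ((L : Set G) ⊆ charKer G (α i)))
    (N : Subgroup G) (hNnormal : N.Normal) (hNL : N ≤ L)
    (j : Fin n) (hNker : (N : Set G) ⊆ charKer G (α j)) :
    IsIrrChar ↥L (fun x => χ x) ∧ ¬ IsIrrChar ↥N (fun x => χ x) := by
  refine restriction_irr_and_reducible_general hχ (fun β hβ hβ_ne ↦ ?_) ⟨hirr j, hconst j⟩
    (hnp j) hNker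
  obtain ⟨i, rfl⟩ := hall β hβ.isIrrChar hβ_ne hβ.charInner_ne_zero
  exact hLker i
end
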